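/- arXiv:2103.16811 — 2 statements merged into one kernel-verified Lean document; each statement's English description precedes it below -/
import Mathlib

section
/- Let n ≥ 3 and let f : F_2^n → {0,1} satisfy f̂(0) = 1/4 and every other Fourier coefficient equal to 0 or ±1/8. Then f is the indicator function of a disjoint union of two affine subspaces of F_2^n, each of dimension n−3. -/
open Finset

/-- The Fourier coefficient `f̂(α) = E_x[f(x)·(-1)^⟨α,x⟩]` of `f : F_2^n → ℝ`. -/
noncomputable def fc {n : ℕ} (f : (Fin n → ZMod 2) → ℝ) (α : Fin n → ZMod 2) : ℝ :=
  (∑ x : Fin n → ZMod 2, f x * (-1 : ℝ) ^ (∑ i, α i * x i : ZMod 2).val) / 2 ^ n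

/-!
After translating so that `f 0 = 1`, Parseval and Fourier inversion show that `F = 8 f̂` takes the
value `-1` exactly three times, and positivity of `∑ x, f x (1 + χ_α x) (1 + χ_β x)` forces
`F (α + β) = 1` whenever `F α = F β = -1`, `α ≠ β`. Let `γ` be the sum of these three frequencies.
Since `f² = f`, the sum of `(F β - F (γ + β))²` over all `β` is `32 - 16 F γ`, to which `0`, the
three frequencies and their translates by `γ` contribute `24 + 2 (2 - F γ)²`. As `F γ ≠ -1`, this
forces `F γ = 0` and leaves nothing for the other `β`, so `|F|` is `γ`-periodic away from `0` and
`γ`. The two halves of `f` on which `χ_γ = ±1` therefore have spectra in `{0, ±f̂(0)/2}`, and a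
Boolean function whose spectrum `g` lies in `{0, ±g(0)}` satisfies `∑ |g| = 1`, so that all phases
align on its support: the support is closed under `x + y + z`, that is, affine.
-/

section Walsh

variable {n : ℕ}

/-- The Walsh character `x ↦ (-1)^⟨α,x⟩` of `F_2^n`, the kernel of the Fourier transform `fc`. -/
noncomputable def walsh (α : Fin n → ZMod 2) : AddChar (Fin n → ZMod 2) ℝ :=
  (AddChar.zmodChar 2 (neg_one_sq : (-1 : ℝ) ^ 2 = 1)).compAddMonoidHom
    (dotProductBilin (ZMod 2) (ZMod 2) α).toAddMonoidHom

lemma fc_eq_sum_walsh (f : (Fin n → ZMod 2) → ℝ) (α : Fin n → ZMod 2) :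
    fc f α = (∑ x, f x * walsh α x) / 2 ^ n := rfl

lemma walsh_apply (α x : Fin n → ZMod 2) : walsh α x = (-1) ^ (α ⬝ᵥ x).val := rfl

lemma walsh_comm (α x : Fin n → ZMod 2) : walsh α x = walsh x α := by
  rw [walsh_apply, walsh_apply, dotProduct_comm]

lemma walsh_add (α β x : Fin n → ZMod 2) : walsh (α + β) x = walsh α x * walsh β x := by
  simp only [walsh_comm _ x, AddChar.map_add_eq_mul]

lemma walsh_zero (x : Fin n → ZMod 2) : walsh 0 x = 1 := by
  rw [walsh_comm, AddChar.map_zero_eq_one]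

lemma walsh_eq_one_or (α x : Fin n → ZMod 2) : walsh α x = 1 ∨ walsh α x = -1 :=
  neg_one_pow_eq_or ℝ _

lemma abs_walsh (α x : Fin n → ZMod 2) : |walsh α x| = 1 := abs_neg_one_pow _

lemma walsh_mul_self (α x : Fin n → ZMod 2) : walsh α x * walsh α x = 1 := by
  rw [← abs_mul_abs_self, abs_walsh, one_mul]

lemma walsh_eq_zero_iff {α : Fin n → ZMod 2} : walsh α = 0 ↔ α = 0 := by
  refine ⟨fun h => funext fun i => ?_, ?_⟩
  · have hi : (-1 : ℝ) ^ (α i).val = 1 := by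
      simpa [walsh_apply] using DFunLike.congr_fun h (Pi.single i 1)
    have hval : ∀ a : ZMod 2, (-1 : ℝ) ^ a.val = 1 → a = 0 := by
      intro a ha
      fin_cases a
      · rfl
      · norm_num [ZMod.val] at ha
    exact hval _ hi
  · rintro rfl
    ext x
    exact walsh_zero x

lemma sum_walsh (x : Fin n → ZMod 2) : ∑ α, walsh α x = if x = 0 then 2 ^ n else 0 := by
  classical
  simp only [walsh_comm _ x, AddChar.sum_eq_ite, walsh_eq_zero_iff]
  simp [ZMod.card]

lemma sum_fc_mul_walsh (f : (Fin n → ZMod 2) → ℝ) (x : Fin n → ZMod 2) :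
    ∑ α, fc f α * walsh α x = f x := by
  simp only [fc_eq_sum_walsh, div_mul_eq_mul_div, sum_mul, ← sum_div, mul_assoc,
    ← AddChar.map_add_eq_mul]
  rw [sum_comm]
  simp only [← mul_sum, sum_walsh, ← ZModModule.sub_eq_add _ x, sub_eq_zero]
  simp

lemma sum_fc_mul_fc_add (f g : (Fin n → ZMod 2) → ℝ) (α : Fin n → ZMod 2) :
    ∑ β, fc f β * fc g (α + β) = fc (f * g) α := by
  calc ∑ β, fc f β * fc g (α + β)
      = (∑ β, ∑ x, g x * walsh α x * (fc f β * walsh β x)) / 2 ^ n := by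
        rw [sum_div]
        refine sum_congr rfl fun β _ => ?_
        rw [fc_eq_sum_walsh g, mul_div_assoc', mul_sum]
        simp only [walsh_add, mul_left_comm, mul_assoc]
    _ = fc (f * g) α := by
        rw [sum_comm, fc_eq_sum_walsh]
        simp only [← mul_sum, sum_fc_mul_walsh, Pi.mul_apply, mul_comm (f _), mul_right_comm]

lemma fc_translate (f : (Fin n → ZMod 2) → ℝ) (a α : Fin n → ZMod 2) :
    fc (fun x => f (x + a)) α = walsh α a * fc f α := by
  rw [fc_eq_sum_walsh, fc_eq_sum_walsh, mul_div_assoc', mul_sum,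
    ← Equiv.sum_comp (Equiv.addRight a) fun x => walsh α a * (f x * walsh α x)]
  congr 1
  refine sum_congr rfl fun x _ => ?_
  rw [Equiv.coe_addRight, AddChar.map_add_eq_mul]
  linear_combination -f (x + a) * walsh α x * walsh_mul_self α a

lemma fc_indicator_walsh_eq {s : ℝ} (hs : s = 1 ∨ s = -1) (f : (Fin n → ZMod 2) → ℝ)
    (γ α : Fin n → ZMod 2) :
    fc ({x | walsh γ x = s}.indicator f) α = (fc f α + s * fc f (α + γ)) / 2 := by
  have hind (x) : {x | walsh γ x = s}.indicator f x = f x * (1 + s * walsh γ x) / 2 := by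
    rcases walsh_eq_one_or γ x with h | h <;> rcases hs with rfl | rfl <;>
      norm_num [Set.indicator_apply, h]
  simp only [fc_eq_sum_walsh, hind, walsh_add]
  rw [mul_div_assoc', ← add_div, mul_sum, ← sum_add_distrib, div_right_comm, sum_div _ _ (2 : ℝ)]
  congr 1
  refine sum_congr rfl fun x _ => ?_
  ring

lemma fc_zero_add_add_add_pos {f : (Fin n → ZMod 2) → ℝ} (hf : ∀ x, 0 ≤ f x) (h0 : 0 < f 0)
    (α β : Fin n → ZMod 2) : 0 < fc f 0 + fc f α + fc f β + fc f (α + β) := by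
  have hexp : fc f 0 + fc f α + fc f β + fc f (α + β) =
      (∑ x, f x * ((1 + walsh α x) * (1 + walsh β x))) / 2 ^ n := by
    simp only [fc_eq_sum_walsh, ← add_div, ← sum_add_distrib, walsh_add, walsh_zero]
    congr 1
    exact sum_congr rfl fun x _ => by ring
  have hwalsh (γ x : Fin n → ZMod 2) : 0 ≤ 1 + walsh γ x := by
    linarith [neg_le_of_abs_le (abs_walsh γ x).le]
  rw [hexp]
  refine div_pos (sum_pos' (fun x _ => ?_) ⟨0, mem_univ _, ?_⟩) (by positivity)
  · exact mul_nonneg (hf x) (mul_nonneg (hwalsh α x) (hwalsh β x))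
  · simp only [AddChar.map_zero_eq_one]
    positivity

end Walsh

section AffineSupport

lemma exists_submodule_eq_image_add {M : Type*} [AddCommGroup M] [Module (ZMod 2) M] {S : Set M}
    (hS : ∀ x ∈ S, ∀ y ∈ S, ∀ z ∈ S, x + y + z ∈ S) {a : M} (ha : a ∈ S) :
    ∃ V : Submodule (ZMod 2) M, S = (a + ·) '' (V : Set M) := by
  let A : AffineSubspace (ZMod 2) M :=
    { carrier := S
      smul_vsub_vadd_mem' := by
        intro c x y z hx hy hz
        obtain rfl | rfl : c = 0 ∨ c = 1 := by revert c; decide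
        · simpa using hz
        · simpa [ZModModule.sub_eq_add] using hS x hx y hy z hz }
  refine ⟨A.direction, Set.ext fun x => ?_⟩
  rw [Set.image_add_left, Set.mem_preimage, neg_add_eq_sub]
  exact (A.vsub_right_mem_direction_iff_mem ha x).symm

variable {n : ℕ} {f : (Fin n → ZMod 2) → ℝ}

lemma add_add_eq_one_of_sum_abs_fc_le (hf : ∑ α, |fc f α| ≤ 1) {x y z : Fin n → ZMod 2}
    (hx : f x = 1) (hy : f y = 1) (hz : f z = 1) : f (x + y + z) = 1 := by
  have hle (x α) : fc f α * walsh α x ≤ |fc f α| := by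
    simpa [abs_mul, abs_walsh] using le_abs_self (fc f α * walsh α x)
  have hphase {x} (hx : f x = 1) (α) : fc f α * walsh α x = |fc f α| := by
    refine (sum_eq_sum_iff_of_le fun α _ => hle x α).mp ?_ α (mem_univ α)
    exact le_antisymm (sum_le_sum fun α _ => hle x α) (by rwa [sum_fc_mul_walsh, hx])
  rw [← hz, ← sum_fc_mul_walsh f, ← sum_fc_mul_walsh f z]
  refine sum_congr rfl fun α _ => ?_
  rw [AddChar.map_add_eq_mul, AddChar.map_add_eq_mul]
  linear_combination walsh α z * walsh α y * ((hphase hx α).trans (hphase hy α).symm) +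
    fc f α * walsh α z * walsh_mul_self α y

lemma fc_zero_eq_ncard_div (hf : ∀ x, f x = 0 ∨ f x = 1) :
    fc f 0 = {x | f x = 1}.ncard / 2 ^ n := by
  have hf' (x) : f x = if f x = 1 then 1 else 0 := by rcases hf x with h | h <;> simp [h]
  rw [fc_eq_sum_walsh, Set.ncard_eq_toFinset_card', Set.toFinset_ofPred, ← sum_boole]
  simp only [walsh_zero, mul_one, ← hf']

lemma exists_eq_one_of_fc_zero_ne_zero (hf : ∀ x, f x = 0 ∨ f x = 1) (h0 : fc f 0 ≠ 0) :
    ∃ a, f a = 1 := by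
  rw [fc_zero_eq_ncard_div hf] at h0
  have hncard : {x | f x = 1}.ncard ≠ 0 := fun h => h0 (by rw [h, Nat.cast_zero, zero_div])
  exact Set.nonempty_of_ncard_ne_zero hncard

lemma mul_self_of_boolean (hf : ∀ x, f x = 0 ∨ f x = 1) : f * f = f :=
  funext fun x => by rcases hf x with h | h <;> simp [h]

lemma sum_abs_fc_eq_one (hf : ∀ x, f x = 0 ∨ f x = 1) (h0 : fc f 0 ≠ 0)
    (h : ∀ α, fc f α = 0 ∨ |fc f α| = fc f 0) : ∑ α, |fc f α| = 1 := by
  refine mul_left_cancel₀ h0 ?_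
  calc fc f 0 * ∑ α, |fc f α| = ∑ α, fc f α * fc f (0 + α) := by
        rw [mul_sum]
        refine sum_congr rfl fun α _ => ?_
        rw [zero_add, ← abs_mul_abs_self]
        rcases h α with h | h <;> simp [h]
    _ = fc f 0 * 1 := by rw [sum_fc_mul_fc_add, mul_self_of_boolean hf, mul_one]

theorem exists_affine_of_flat_spectrum (hf : ∀ x, f x = 0 ∨ f x = 1) (h0 : fc f 0 ≠ 0)
    (h : ∀ α, fc f α = 0 ∨ |fc f α| = fc f 0) :
    ∃ (a : Fin n → ZMod 2) (V : Submodule (ZMod 2) (Fin n → ZMod 2)),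
      {x | f x = 1} = (a + ·) '' (V : Set (Fin n → ZMod 2)) := by
  obtain ⟨a, ha⟩ := exists_eq_one_of_fc_zero_ne_zero hf h0
  refine ⟨a, exists_submodule_eq_image_add (S := {x | f x = 1}) (fun x hx y hy z hz => ?_) ha⟩
  exact add_add_eq_one_of_sum_abs_fc_le (sum_abs_fc_eq_one hf h0 h).le hx hy hz

lemma fc_zero_eq_two_pow_finrank_div (hf : ∀ x, f x = 0 ∨ f x = 1) {a : Fin n → ZMod 2}
    {V : Submodule (ZMod 2) (Fin n → ZMod 2)}
    (hV : {x | f x = 1} = (a + ·) '' (V : Set (Fin n → ZMod 2))) :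
    fc f 0 = 2 ^ Module.finrank (ZMod 2) V / 2 ^ n := by
  rw [fc_zero_eq_ncard_div hf, hV, Set.ncard_image_of_injective _ (add_right_injective a)]
  have hcard := Module.natCard_eq_pow_finrank (K := ZMod 2) (V := V)
  rw [Nat.card_zmod] at hcard
  rw [← Nat.card_coe_set_eq]
  exact_mod_cast congrArg (fun m : ℕ => (m : ℝ) / 2 ^ n) hcard

end AffineSupport

section Translates

lemma sum_sq_sub_translate {G R : Type*} [AddGroup G] [Fintype G] [CommRing R] (F : G → R)
    (γ : G) :
    ∑ β, (F β - F (γ + β)) ^ 2 = 2 * ∑ β, F β ^ 2 - 2 * ∑ β, F β * F (γ + β) := by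
  have htranslate : ∑ β, F (γ + β) ^ 2 = ∑ β, F β ^ 2 :=
    Equiv.sum_comp (Equiv.addLeft γ) (F · ^ 2)
  simp only [sub_sq, sum_add_distrib, sum_sub_distrib, htranslate, mul_assoc, ← mul_sum]
  ring

lemma two_mul_sum_le_sum_of_translate_eq {G R : Type*} [AddGroup G] [Fintype G] [Semiring R]
    [PartialOrder R] [IsOrderedAddMonoid R] {E : G → R} {γ : G}
    (hE : ∀ β, 0 ≤ E β) (hγ : ∀ β, E (γ + β) = E β) {T : Finset G}
    (hT : ∀ β ∈ T, γ + β ∉ T) : 2 * ∑ β ∈ T, E β ≤ ∑ β, E β := by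
  classical
  have hdisj : Disjoint T (T.map (addLeftEmbedding γ)) := by
    simpa [disjoint_right] using hT
  calc 2 * ∑ β ∈ T, E β = ∑ β ∈ T ∪ T.map (addLeftEmbedding γ), E β := by
        simp [sum_union hdisj, hγ, two_mul]
    _ ≤ ∑ β, E β := sum_le_univ_sum_of_nonneg hE

variable {G : Type*} [AddCommGroup G] [Module (ZMod 2) G]

lemma translate_notMem_insert {γ α : G} (hγ : γ ≠ 0) [DecidableEq G] {T : Finset G}
    (hT : ∀ β ∈ T, γ + β ∉ T) (hα : γ + α ∉ T) : ∀ β ∈ insert α T, γ + β ∉ insert α T := by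
  have hinvol (β : G) : γ + (γ + β) = β := by rw [← add_assoc, ZModModule.add_self, zero_add]
  intro β hβ hβ'
  rcases mem_insert.mp hβ with rfl | hβT <;> rcases mem_insert.mp hβ' with h | hβT'
  · exact hγ (add_eq_right.mp h)
  · exact hα hβT'
  · exact hα (by rwa [← h, hinvol])
  · exact hT β hβT hβT'

lemma exists_add_eq_one_of_card_eq_three [Fintype G] {F : G → ℝ} (hcard : #{α | F α = -1} = 3)
    (hadd : ∀ α β, α ≠ β → F α = -1 → F β = -1 → F (α + β) = 1) :
    ∃ γ ≠ 0, ∀ β, F β = -1 → F (γ + β) = 1 := by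
  classical
  obtain ⟨a, b, c, hab, hac, hbc, habc⟩ := card_eq_three.mp hcard
  have hmem (β) : F β = -1 ↔ β = a ∨ β = b ∨ β = c := by
    simpa using congrArg (β ∈ ·) habc
  have ha : F a = -1 := (hmem a).2 (by simp)
  have hb : F b = -1 := (hmem b).2 (by simp)
  have hc : F c = -1 := (hmem c).2 (by simp)
  have hγ (β) (hβ : F β = -1) : F (a + b + c + β) = 1 := by
    rcases (hmem β).mp hβ with rfl | rfl | rfl
    · rw [show β + b + c + β = b + c + (β + β) by abel, ZModModule.add_self, add_zero]
      exact hadd _ _ hbc hb hc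
    · rw [show a + β + c + β = a + c + (β + β) by abel, ZModModule.add_self, add_zero]
      exact hadd _ _ hac ha hc
    · rw [add_assoc, ZModModule.add_self, add_zero]
      exact hadd _ _ hab ha hb
  refine ⟨a + b + c, fun h0 => ?_, hγ⟩
  have ha' := hγ a ha
  rw [h0, zero_add, ha] at ha'
  norm_num at ha'

end Translates

section Period

lemma two_mul_card_filter_eq_neg_one {ι R : Type*} [Ring R] [CharZero R] [DecidableEq R]
    {s : Finset ι} {F : ι → R} (hF : ∀ i ∈ s, F i = 0 ∨ F i = 1 ∨ F i = -1) :
    2 * (#{i ∈ s | F i = -1} : R) = ∑ i ∈ s, F i ^ 2 - ∑ i ∈ s, F i := by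
  rw [← sum_boole, mul_sum, ← sum_sub_distrib]
  refine sum_congr rfl fun i hi => ?_
  rcases hF i hi with h | h | h <;> norm_num [h]

/-- The properties of `F = 8 f̂` used to find the period of the Fourier support of a Boolean `f`
with `f 0 = 1`, `f̂ 0 = 1/4` and all other coefficients in `{0, ±1/8}`: `conv` encodes `f² = f`,
`sum_eq` encodes `f 0 = 1`, and `add_eq_one` makes `{α | F α = -1}` sum-free. -/
structure IsScaledSpectrum {G : Type*} [AddCommGroup G] [Fintype G] (F : G → ℝ) : Prop where
  zero_eq : F 0 = 2
  eq_or : ∀ α ≠ 0, F α = 0 ∨ F α = 1 ∨ F α = -1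
  conv : ∀ α, ∑ β, F β * F (α + β) = 8 * F α
  sum_eq : ∑ α, F α = 8
  add_eq_one : ∀ α β, α ≠ β → F α = -1 → F β = -1 → F (α + β) = 1

namespace IsScaledSpectrum

variable {G : Type*} [AddCommGroup G] [Fintype G] {F : G → ℝ}

lemma sum_sq (hF : IsScaledSpectrum F) : ∑ α, F α ^ 2 = 16 := by
  have hconv := hF.conv 0
  simp only [zero_add, ← sq, hF.zero_eq] at hconv
  linarith

lemma card_eq_neg_one (hF : IsScaledSpectrum F) : #{α | F α = -1} = 3 := by
  classical
  have hcount := two_mul_card_filter_eq_neg_one fun α (hα : α ∈ univ.erase 0) =>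
    hF.eq_or α (ne_of_mem_erase hα)
  have hzero : (0 : G) ∉ univ.filter fun α => F α = -1 := by norm_num [hF.zero_eq]
  rw [filter_erase, erase_eq_of_notMem hzero, sum_erase_eq_sub (mem_univ 0),
    sum_erase_eq_sub (mem_univ 0), hF.sum_sq, hF.sum_eq, hF.zero_eq] at hcount
  have hcard : (#{α | F α = -1} : ℝ) = 3 := by linarith
  exact_mod_cast hcard

lemma sum_sq_sub_translate_insert_zero (hF : IsScaledSpectrum F) [DecidableEq G] {γ : G}
    (hneg : ∀ β, F β = -1 → F (γ + β) = 1) :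
    ∑ β ∈ insert 0 ({α | F α = -1} : Finset G), (F β - F (γ + β)) ^ 2 = (2 - F γ) ^ 2 + 12 := by
  have hfour : ∀ β ∈ ({α | F α = -1} : Finset G), (F β - F (γ + β)) ^ 2 = 4 := fun β hβ => by
    rw [mem_filter_univ] at hβ
    norm_num [hβ, hneg β hβ]
  rw [sum_insert (by norm_num [hF.zero_eq]), sum_congr rfl hfour, sum_const, hF.card_eq_neg_one,
    add_zero, hF.zero_eq]
  norm_num

variable [Module (ZMod 2) G]

lemma two_mul_sum_sq_sub_translate_le (hF : IsScaledSpectrum F) {γ : G} {T : Finset G}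
    (hT : ∀ β ∈ T, γ + β ∉ T) : 2 * ∑ β ∈ T, (F β - F (γ + β)) ^ 2 ≤ 32 - 16 * F γ := by
  calc 2 * ∑ β ∈ T, (F β - F (γ + β)) ^ 2 ≤ ∑ β, (F β - F (γ + β)) ^ 2 := by
        refine two_mul_sum_le_sum_of_translate_eq (fun β => sq_nonneg _) (fun β => ?_) hT
        rw [← add_assoc, ZModModule.add_self, zero_add, sub_sq_comm]
    _ = 32 - 16 * F γ := by
        rw [sum_sq_sub_translate, hF.sum_sq, hF.conv]
        ring

lemma translate_notMem_insert_zero (hF : IsScaledSpectrum F) [DecidableEq G] {γ : G} (hγ : γ ≠ 0)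
    (hneg : ∀ β, F β = -1 → F (γ + β) = 1) :
    ∀ β ∈ insert 0 ({α | F α = -1} : Finset G),
      γ + β ∉ insert 0 ({α | F α = -1} : Finset G) := by
  refine translate_notMem_insert hγ (fun β hβ hβ' => ?_) fun hγneg => ?_
  · have hpos := hneg β (mem_filter_univ β |>.mp hβ)
    norm_num [hpos] at hβ'
  · have hzero := hneg γ (by simpa using hγneg)
    norm_num [ZModModule.add_self, hF.zero_eq] at hzero

lemma eq_zero_of_translate_neg (hF : IsScaledSpectrum F) {γ : G} (hγ : γ ≠ 0)
    (hneg : ∀ β, F β = -1 → F (γ + β) = 1) : F γ = 0 := by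
  classical
  have hle := hF.two_mul_sum_sq_sub_translate_le (hF.translate_notMem_insert_zero hγ hneg)
  rw [hF.sum_sq_sub_translate_insert_zero hneg] at hle
  rcases hF.eq_or γ hγ with h | h | h
  · exact h
  · norm_num [h] at hle
  · have hzero := hneg γ h
    norm_num [ZModModule.add_self, hF.zero_eq] at hzero

lemma abs_translate_eq (hF : IsScaledSpectrum F) {γ : G} (hγ : γ ≠ 0)
    (hneg : ∀ β, F β = -1 → F (γ + β) = 1) {α : G} (hα : α ≠ 0) (hαγ : α ≠ γ) :
    |F (γ + α)| = |F α| := by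
  classical
  by_cases hFα : F α = -1
  · simp [hFα, hneg α hFα]
  by_cases hFγα : F (γ + α) = -1
  · have hpos := hneg _ hFγα
    rw [← add_assoc, ZModModule.add_self, zero_add] at hpos
    simp [hFγα, hpos]
  have hγα : γ + α ≠ 0 := by
    rwa [← ZModModule.sub_eq_add, sub_ne_zero, ne_comm]
  have hle := hF.two_mul_sum_sq_sub_translate_le <| translate_notMem_insert hγ
    (hF.translate_notMem_insert_zero hγ hneg) (α := α) (by simp [hγα, hFγα])
  rw [sum_insert (by simp [hα, hFα]), hF.sum_sq_sub_translate_insert_zero hneg,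
    hF.eq_zero_of_translate_neg hγ hneg] at hle
  have hsq : (F α - F (γ + α)) ^ 2 = 0 := le_antisymm (by linarith) (sq_nonneg _)
  rw [sub_eq_zero.mp (pow_eq_zero_iff two_ne_zero |>.mp hsq)]

theorem exists_period (hF : IsScaledSpectrum F) :
    ∃ γ, F γ = 0 ∧ ∀ α, α ≠ 0 → α ≠ γ → |F (γ + α)| = |F α| := by
  obtain ⟨γ, hγ, hneg⟩ := exists_add_eq_one_of_card_eq_three hF.card_eq_neg_one hF.add_eq_one
  exact ⟨γ, hF.eq_zero_of_translate_neg hγ hneg, fun _ => hF.abs_translate_eq hγ hneg⟩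

end IsScaledSpectrum

end Period

section BooleanSpectrum

variable {n : ℕ} {f : (Fin n → ZMod 2) → ℝ}

lemma isScaledSpectrum_fc (hf : ∀ x, f x = 0 ∨ f x = 1) (hf0 : f 0 = 1) (h0 : fc f 0 = 1 / 4)
    (h : ∀ α ≠ 0, fc f α = 0 ∨ |fc f α| = 1 / 8) : IsScaledSpectrum fun α => 8 * fc f α where
  zero_eq := by norm_num [h0]
  eq_or α hα := by
    rcases h α hα with h | h
    · simp [h]
    · rcases eq_or_eq_neg_of_abs_eq h with h | h <;> norm_num [h]
  conv α := by
    have hconv := sum_fc_mul_fc_add f f α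
    rw [mul_self_of_boolean hf] at hconv
    simp only [← hconv, mul_sum]
    exact sum_congr rfl fun β _ => by ring
  sum_eq := by
    have hinv := sum_fc_mul_walsh f 0
    simp only [AddChar.map_zero_eq_one, mul_one, hf0] at hinv
    rw [← mul_sum, hinv, mul_one]
  add_eq_one α β hαβ hα hβ := by
    have hpos := fc_zero_add_add_add_pos
      (fun x => by rcases hf x with h | h <;> norm_num [h]) (by norm_num [hf0] : 0 < f 0) α β
    have hne : α + β ≠ 0 := by rwa [← ZModModule.sub_eq_add, sub_ne_zero]
    have hsum : 0 < fc f (α + β) := by linarith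
    have habs : |fc f (α + β)| = 1 / 8 := (h _ hne).resolve_left hsum.ne'
    rw [← abs_of_pos hsum, habs]
    norm_num

lemma exists_period_fc (hf : ∀ x, f x = 0 ∨ f x = 1) (h0 : fc f 0 = 1 / 4)
    (h : ∀ α ≠ 0, fc f α = 0 ∨ |fc f α| = 1 / 8) :
    ∃ γ, fc f γ = 0 ∧ ∀ α, α ≠ 0 → α ≠ γ → |fc f (γ + α)| = |fc f α| := by
  obtain ⟨a, ha⟩ := exists_eq_one_of_fc_zero_ne_zero hf (by norm_num [h0])
  have habs (α) : |fc (fun x => f (x + a)) α| = |fc f α| := by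
    rw [fc_translate, abs_mul, abs_walsh, one_mul]
  have htranslate : IsScaledSpectrum fun α => 8 * fc (fun x => f (x + a)) α := by
    refine isScaledSpectrum_fc (fun x => hf (x + a)) (by rwa [zero_add]) ?_ fun α hα => ?_
    · rw [fc_translate, walsh_zero, one_mul, h0]
    · rw [habs, ← abs_eq_zero, habs, abs_eq_zero]
      exact h α hα
  obtain ⟨γ, hγ, hper⟩ := htranslate.exists_period
  refine ⟨γ, ?_, fun α hα hαγ => ?_⟩
  · rw [← abs_eq_zero, ← habs, abs_eq_zero]
    simpa using hγ
  · simpa [abs_mul, habs] using hper α hα hαγ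

lemma fc_indicator_walsh_eq_zero_or {γ : Fin n → ZMod 2} {s : ℝ} (hs : s = 1 ∨ s = -1)
    (h0 : 0 ≤ fc f 0) (h : ∀ α ≠ 0, fc f α = 0 ∨ |fc f α| = fc f 0 / 2)
    (hγ : fc f γ = 0) (hper : ∀ α, α ≠ 0 → α ≠ γ → |fc f (γ + α)| = |fc f α|)
    (α : Fin n → ZMod 2) :
    fc ({x | walsh γ x = s}.indicator f) α = 0 ∨
      |fc ({x | walsh γ x = s}.indicator f) α| = fc f 0 / 2 := by
  have hs_abs : |s| = 1 := by rcases hs with rfl | rfl <;> norm_num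
  rw [fc_indicator_walsh_eq hs]
  rcases eq_or_ne α 0 with rfl | hα
  · rw [zero_add, hγ, mul_zero, add_zero, abs_of_nonneg (by positivity)]
    exact .inr rfl
  rcases eq_or_ne α γ with rfl | hαγ
  · rw [ZModModule.add_self, hγ, zero_add, abs_div, abs_mul, hs_abs, abs_of_nonneg h0]
    norm_num
  have habs : |s * fc f (α + γ)| = |fc f α| := by
    rw [abs_mul, hs_abs, one_mul, add_comm, hper α hα hαγ]
  rcases abs_eq_abs.mp habs with heq | heq
  · rw [heq, add_self_div_two]
    exact h α hα
  · simp [heq]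

theorem exists_affine_inter_walsh_eq {γ : Fin n → ZMod 2} {s : ℝ} (hs : s = 1 ∨ s = -1)
    (hf : ∀ x, f x = 0 ∨ f x = 1) (h0 : 0 < fc f 0)
    (h : ∀ α ≠ 0, fc f α = 0 ∨ |fc f α| = fc f 0 / 2) (hγ : fc f γ = 0)
    (hper : ∀ α, α ≠ 0 → α ≠ γ → |fc f (γ + α)| = |fc f α|) :
    ∃ (a : Fin n → ZMod 2) (V : Submodule (ZMod 2) (Fin n → ZMod 2)),
      2 ^ Module.finrank (ZMod 2) V / 2 ^ n = fc f 0 / 2 ∧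
      {x | f x = 1 ∧ walsh γ x = s} = (a + ·) '' (V : Set (Fin n → ZMod 2)) := by
  classical
  set g := {x | walsh γ x = s}.indicator f with hg
  have hgbool (x) : g x = 0 ∨ g x = 1 := by
    by_cases hx : walsh γ x = s <;> simp [hg, hx, hf x]
  have hg0 : fc g 0 = fc f 0 / 2 := by
    rw [hg, fc_indicator_walsh_eq hs, zero_add, hγ, mul_zero, add_zero]
  have hsupport : {x | f x = 1 ∧ walsh γ x = s} = {x | g x = 1} := by
    ext x
    by_cases hx : walsh γ x = s <;> simp [hg, hx]
  obtain ⟨a, V, hV⟩ := exists_affine_of_flat_spectrum hgbool (by linarith)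
    (hg0 ▸ fc_indicator_walsh_eq_zero_or hs h0.le h hγ hper)
  exact ⟨a, V, (fc_zero_eq_two_pow_finrank_div hgbool hV).symm.trans hg0, hsupport.trans hV⟩

end BooleanSpectrum

lemma add_eq_of_two_pow_div_two_pow_eq {d n k : ℕ} (h : (2 : ℝ) ^ d / 2 ^ n = 1 / 2 ^ k) :
    d + k = n := by
  rw [div_eq_div_iff (by positivity) (by positivity), one_mul, ← pow_add] at h
  exact pow_right_injective₀ two_pos (by norm_num) h

/-- The k = 3 case of the small-k lemma. -/
theorem stmt_13 {n : ℕ} (hn : 3 ≤ n) (f : (Fin n → ZMod 2) → ℝ)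
    (hf : ∀ x, f x = 0 ∨ f x = 1)
    (h0 : fc f 0 = 1 / 2 ^ (3 - 1))
    (h : ∀ α : Fin n → ZMod 2, α ≠ 0 →
      fc f α = 0 ∨ fc f α = 1 / 2 ^ 3 ∨ fc f α = -(1 / 2 ^ 3)) :
    ∃ (a b : Fin n → ZMod 2) (V W : Submodule (ZMod 2) (Fin n → ZMod 2)),
      Module.finrank (ZMod 2) V = n - 3 ∧ Module.finrank (ZMod 2) W = n - 3 ∧
      Disjoint ((a + ·) '' (V : Set (Fin n → ZMod 2)))
        ((b + ·) '' (W : Set (Fin n → ZMod 2))) ∧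
      {x | f x = 1} =
        (a + ·) '' (V : Set (Fin n → ZMod 2)) ∪ (b + ·) '' (W : Set (Fin n → ZMod 2)) := by
  have h0' : fc f 0 = 1 / 4 := by norm_num [h0]
  have habs : ∀ α ≠ 0, fc f α = 0 ∨ |fc f α| = 1 / 8 := fun α hα => by
    rcases h α hα with h | h | h <;> norm_num [h]
  obtain ⟨γ, hγ, hper⟩ := exists_period_fc hf h0' habs
  have hhalf0 : fc f 0 / 2 = 1 / 8 := by norm_num [h0']
  have hhalf {s : ℝ} (hs : s = 1 ∨ s = -1) :=
    exists_affine_inter_walsh_eq hs hf (by norm_num [h0']) (by rwa [hhalf0]) hγ hper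
  obtain ⟨a, V, hV, haV⟩ := hhalf (.inl rfl)
  obtain ⟨b, W, hW, hbW⟩ := hhalf (.inr rfl)
  have hdim {d : ℕ} (hd : (2 : ℝ) ^ d / 2 ^ n = fc f 0 / 2) : d = n - 3 :=
    Nat.eq_sub_of_add_eq (add_eq_of_two_pow_div_two_pow_eq (by norm_num [hd, hhalf0]))
  refine ⟨a, b, V, W, hdim hV, hdim hW, ?_, ?_⟩ <;> rw [← haV, ← hbW]
  · refine Set.disjoint_left.mpr fun x hx hx' => ?_
    linarith [hx.2.symm.trans hx'.2]
  · ext x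
    simp only [Set.mem_union, Set.mem_ofPred_eq, ← and_or_left, walsh_eq_one_or, and_true]
end

section
/- (Main Theorem) Let k ≥ 1, n > k, and let f : F_2^n → {0,1} be a non-trivial Boolean function (not identically 0 or 1) all of whose Fourier coefficients lie in {0, ±1/2^k, ±2/2^k}. If f̂(0) = 1/2^k, then f is the indicator of an affine subspace of dimension n−k. If f̂(0) = 2/2^k and f is irreducible, then f is the indicator of a disjoint union of two affine subspaces of dimension n−k, or (only possible when k = 4) of four disjoint affine subspaces of dimension n−k−1. -/
open Finset

/-!
Let `S` be the support of `f` and `G α = 2^k f̂(α)`. If `G 0 = 1`, then the size `2^(n-k)` of `S`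
divides every exponential sum over `S`. So a character is constant on `S` unless its sum vanishes,
and Fourier inversion shows that `x + y + z ∈ S` for all `x, y, z ∈ S`, that is, `S` is affine.

If `G 0 = 2` and `f` is irreducible, the other `G α` are `0` or `±1`. When `G α = ±1`, call the
quarter of `S` on which the character of `α` disagrees with the sign of `G α` the minority of `α`.
By the first case it is affine. Distinct minorities of `α` and `β` are disjoint or share half of
their points, and in the second situation their symmetric difference is the minority of `α + β`.

Suppose first that translation by some `γ ≠ 0` preserves the set `{G = ±1}`. Then `G β ± G (β + γ)`
is always even, and by the first case the two halves of `S` cut out by `γ` are affine.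

Otherwise a count on four suitable frequencies yields at least four minorities that contain a common
core `Q` with `|S| / 8` elements. Outside `Q` these minorities are disjoint petals of the same size,
so there are at most seven. A minority that meets `Q` contains `Q`, for there is no room for it
between the petals, and by Fourier inversion each point of `S` lies in `2^(k-1) - 1` minorities.
Hence `4 ≤ 2^(k-1) - 1 ≤ 7`, which forces `k = 4`, and `Q` and the seven petals partition `S`. The
union of any two of these eight pieces is a minority, so they pair up to four affine subspaces.
-/

open scoped symmDiff

variable {n : ℕ}

section Characters

/-- The character `x ↦ (-1)^⟨α, x⟩` of `F_2^n`, with values in `ℤ`. -/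
def chi (α : Fin n → ZMod 2) : AddChar (Fin n → ZMod 2) ℤ :=
  (AddChar.zmodChar 2 (neg_one_sq (R := ℤ))).compAddMonoidHom
    (dotProductEquiv (ZMod 2) (Fin n) α).toAddMonoidHom

theorem chi_apply (α x : Fin n → ZMod 2) : chi α x = (-1) ^ (α ⬝ᵥ x).val := rfl

theorem chi_comm (α x : Fin n → ZMod 2) : chi α x = chi x α := by
  rw [chi_apply, chi_apply, dotProduct_comm]

theorem chi_add_left (α β x : Fin n → ZMod 2) : chi (α + β) x = chi α x * chi β x := by
  simp only [chi_comm _ x, AddChar.map_add_eq_mul]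

@[simp]
theorem chi_zero_left (x : Fin n → ZMod 2) : chi 0 x = 1 := by
  rw [chi_comm, AddChar.map_zero_eq_one]

theorem isUnit_chi (α x : Fin n → ZMod 2) : IsUnit (chi α x) :=
  isUnit_one.neg.pow _

theorem chi_eq_one_iff {α x : Fin n → ZMod 2} : chi α x = 1 ↔ α ⬝ᵥ x = 0 := by
  rw [chi_apply]
  generalize α ⬝ᵥ x = t
  revert t
  decide

theorem chi_eq_zero_iff {α : Fin n → ZMod 2} : chi α = 0 ↔ α = 0 := by
  simp only [AddChar.eq_zero_iff, chi_eq_one_iff, dotProduct_eq_zero_iff]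

theorem sum_chi (α : Fin n → ZMod 2) : ∑ x, chi α x = if α = 0 then 2 ^ n else 0 := by
  classical
  simp [AddChar.sum_eq_ite, chi_eq_zero_iff]

end Characters

section CharSum

variable {S : Finset (Fin n → ZMod 2)} {α β : Fin n → ZMod 2} {e : ℤ}

/-- The exponential sum `∑_{x ∈ S} (-1)^⟨α, x⟩`, which is `2^n` times the Fourier coefficient
at `α` of the indicator function of `S`. -/
def charSum (S : Finset (Fin n → ZMod 2)) (α : Fin n → ZMod 2) : ℤ := ∑ x ∈ S, chi α x

@[simp]
theorem charSum_zero (S : Finset (Fin n → ZMod 2)) : charSum S 0 = #S := by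
  simp [charSum]

theorem abs_charSum_le_card (S : Finset (Fin n → ZMod 2)) (α : Fin n → ZMod 2) :
    |charSum S α| ≤ #S := by
  refine (abs_sum_le_sum_abs _ _).trans_eq ?_
  simp only [Int.isUnit_iff_abs_eq.mp (isUnit_chi _ _), sum_const, nsmul_one]

theorem sum_charSum_mul_chi (S : Finset (Fin n → ZMod 2)) (x : Fin n → ZMod 2) :
    ∑ α, charSum S α * chi α x = if x ∈ S then 2 ^ n else 0 := by
  have inner (y : Fin n → ZMod 2) : ∑ α, chi α y * chi α x = if y = x then 2 ^ n else 0 := by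
    simp only [← AddChar.map_add_eq_mul, chi_comm _ (y + x), sum_chi]
    simp only [← ZModModule.sub_eq_add, sub_eq_zero]
  simp only [charSum, sum_mul]
  rw [sum_comm]
  simp only [inner, sum_ite_eq']

theorem sum_charSum_sq (S : Finset (Fin n → ZMod 2)) :
    ∑ α, charSum S α ^ 2 = 2 ^ n * #S := by
  calc ∑ α, charSum S α ^ 2 = ∑ x ∈ S, ∑ α, charSum S α * chi α x := by
        rw [sum_comm]
        simp only [sq, ← mul_sum]
        rfl
    _ = 2 ^ n * #S := by
        rw [sum_congr rfl fun x hx => (sum_charSum_mul_chi S x).trans (if_pos hx), sum_const,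
          nsmul_eq_mul, mul_comm]

theorem chi_eq_of_charSum_eq_mul_card (he : IsUnit e) (h : charSum S α = e * #S)
    {x : Fin n → ZMod 2} (hx : x ∈ S) : chi α x = e := by
  have defect : ∑ y ∈ S, (1 - e * chi α y) = 0 := by
    rw [sum_sub_distrib, ← mul_sum, ← charSum, h, ← mul_assoc, Int.isUnit_mul_self he]
    simp
  have nonneg (y) : 0 ≤ 1 - e * chi α y :=
    sub_nonneg.2 (Int.isUnit_iff_abs_eq.mp (he.mul (isUnit_chi α y)) ▸ le_abs_self _)
  have hxe := (sum_eq_zero_iff_of_nonneg fun y _ => nonneg y).mp defect x hx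
  rcases Int.isUnit_eq_or_eq_neg (isUnit_chi α x) he with hchi | hchi
  · exact hchi
  · rw [hchi, mul_neg, Int.isUnit_mul_self he] at hxe
    norm_num at hxe

/-- The part of `S` on the affine hyperplane `(-1)^⟨α, x⟩ = e`. -/
def side (S : Finset (Fin n → ZMod 2)) (α : Fin n → ZMod 2) (e : ℤ) :
    Finset (Fin n → ZMod 2) := S.filter (chi α · = e)

theorem mem_side {x : Fin n → ZMod 2} : x ∈ side S α e ↔ x ∈ S ∧ chi α x = e := mem_filter

theorem side_subset : side S α e ⊆ S := filter_subset _ _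

theorem two_mul_charSum_side (he : IsUnit e) :
    2 * charSum (side S α e) β = charSum S β + e * charSum S (α + β) := by
  simp only [charSum, side, sum_filter, mul_sum, ← sum_add_distrib, chi_add_left]
  refine sum_congr rfl fun x _ => ?_
  rcases Int.isUnit_iff.mp (isUnit_chi α x) with hx | hx <;>
    rcases Int.isUnit_iff.mp he with rfl | rfl <;> simp [hx] <;> ring

theorem two_mul_card_side (he : IsUnit e) : 2 * (#(side S α e) : ℤ) = #S + e * charSum S α := by
  simpa using two_mul_charSum_side (S := S) (α := α) (β := 0) he

theorem inter_side_of_subset {T : Finset (Fin n → ZMod 2)} (hT : T ⊆ S) :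
    T ∩ side S α e = side T α e := by
  rw [side, inter_filter, inter_eq_left.2 hT, side]

theorem disjoint_side_neg (he : IsUnit e) : Disjoint (side S α e) (side S α (-e)) :=
  disjoint_filter.2 fun _ _ h h' => he.ne_zero (self_eq_neg.mp (h.symm.trans h'))

theorem side_union_side_neg (he : IsUnit e) : side S α e ∪ side S α (-e) = S := by
  rw [side, side, ← filter_or]
  exact filter_true_of_mem fun x _ => Int.isUnit_eq_or_eq_neg (isUnit_chi α x) he

theorem side_add {e' : ℤ} (he : IsUnit e) (he' : IsUnit e') :
    side S (α + β) (-(e * e')) = side S α (-e) ∆ side S β (-e') := by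
  ext x
  simp only [mem_symmDiff, mem_side, chi_add_left]
  rcases Int.isUnit_iff.mp (isUnit_chi α x) with hα | hα <;>
    rcases Int.isUnit_iff.mp (isUnit_chi β x) with hβ | hβ <;>
    rcases Int.isUnit_iff.mp he with rfl | rfl <;>
    rcases Int.isUnit_iff.mp he' with rfl | rfl <;> simp [hα, hβ]

end CharSum

section Flats

variable {E : Type*} [AddCommGroup E] [Module (ZMod 2) E]

/-- `T` is a `d`-dimensional affine subspace of a vector space over `F_2`, presented as a
translate of a linear subspace. -/
def IsFlat (d : ℕ) (T : Set E) : Prop :=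
  ∃ (a : E) (V : Submodule (ZMod 2) E), Module.finrank (ZMod 2) V = d ∧ T = (a + ·) '' (V : Set E)

/-- A set is irreducible if no proper affine subspace contains it. -/
def IsAffinelyIrreducible (T : Set E) : Prop :=
  ∀ (a : E) (V : Submodule (ZMod 2) E), T ⊆ (a + ·) '' (V : Set E) → V = ⊤

theorem exists_eq_translate_submodule {T : Set E} (hT : T.Nonempty)
    (hadd : ∀ x ∈ T, ∀ y ∈ T, ∀ z ∈ T, x + y + z ∈ T) :
    ∃ (a : E) (V : Submodule (ZMod 2) E), T = (a + ·) '' (V : Set E) := by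
  obtain ⟨a, ha⟩ := hT
  let V : AddSubgroup E :=
    { carrier := {v | a + v ∈ T}
      zero_mem' := by simpa using ha
      add_mem' := fun {u v} hu hv => by
        have h := hadd _ hu _ ha _ hv
        rwa [add_right_comm a u a, ZModModule.add_self, zero_add, add_left_comm] at h
      neg_mem' := fun {v} hv => by simpa only [ZModModule.neg_eq_self] using hv }
  refine ⟨a, AddSubgroup.toZModSubmodule 2 V, ?_⟩
  ext x
  simp [V]

theorem exists_chi_eq_of_card_dvd_charSum {S : Finset (Fin n → ZMod 2)} {α : Fin n → ZMod 2}
    (hdvd : (#S : ℤ) ∣ charSum S α) (hα : charSum S α ≠ 0) :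
    ∃ e : ℤ, IsUnit e ∧ ∀ x ∈ S, chi α x = e := by
  obtain ⟨e, he⟩ := hdvd
  rw [he] at hα
  have he_unit : IsUnit e := by
    have habs := abs_charSum_le_card S α
    rw [he, abs_mul, Nat.abs_cast] at habs
    have hcard : (0 : ℤ) < #S := by
      have := left_ne_zero_of_mul hα
      positivity
    exact Int.isUnit_iff_abs_eq.2 (le_antisymm (le_of_mul_le_mul_left (by linarith) hcard)
      (Int.one_le_abs (right_ne_zero_of_mul hα)))
  exact ⟨e, he_unit, fun x => chi_eq_of_charSum_eq_mul_card he_unit (he.trans (mul_comm _ _))⟩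

theorem add_add_mem_of_card_dvd_charSum {S : Finset (Fin n → ZMod 2)}
    (hdvd : ∀ α, (#S : ℤ) ∣ charSum S α) {x y z : Fin n → ZMod 2}
    (hx : x ∈ S) (hy : y ∈ S) (hz : z ∈ S) : x + y + z ∈ S := by
  have term_eq (α) : charSum S α * chi α (x + y + z) = charSum S α * chi α x := by
    by_cases hα : charSum S α = 0
    · rw [hα, zero_mul, zero_mul]
    · obtain ⟨e, he, hchi⟩ := exists_chi_eq_of_card_dvd_charSum (hdvd α) hα
      rw [AddChar.map_add_eq_mul, AddChar.map_add_eq_mul, hchi x hx, hchi y hy, hchi z hz,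
        Int.isUnit_mul_self he, one_mul]
  have inversion := sum_charSum_mul_chi S (x + y + z)
  rw [sum_congr rfl fun α _ => term_eq α, sum_charSum_mul_chi, if_pos hx] at inversion
  by_contra hmem
  simp [hmem] at inversion

theorem isFlat_of_card_dvd_charSum {S : Finset (Fin n → ZMod 2)} {d : ℕ} (hcard : #S = 2 ^ d)
    (hdvd : ∀ α, (#S : ℤ) ∣ charSum S α) : IsFlat d (S : Set (Fin n → ZMod 2)) := by
  have hne : S.Nonempty := card_pos.1 (by simp [hcard])
  obtain ⟨a, V, hV⟩ := exists_eq_translate_submodule (T := (S : Set (Fin n → ZMod 2))) hne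
    fun x hx y hy z hz => add_add_mem_of_card_dvd_charSum hdvd hx hy hz
  have hcardV : #S = Nat.card V := by
    rw [← Set.ncard_coe_finset, hV, Set.ncard_image_of_injective _ (add_right_injective a)]
    rfl
  rw [Module.natCard_eq_pow_finrank (K := ZMod 2), Nat.card_zmod, hcard] at hcardV
  exact ⟨a, V, Nat.pow_right_injective le_rfl hcardV.symm, hV⟩

theorem IsAffinelyIrreducible.eq_zero_of_charSum_eq_mul_card {S : Finset (Fin n → ZMod 2)}
    (hirr : IsAffinelyIrreducible (S : Set (Fin n → ZMod 2))) (hS : S.Nonempty) {α : Fin n → ZMod 2}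
    {e : ℤ} (he : IsUnit e) (h : charSum S α = e * #S) : α = 0 := by
  obtain ⟨a, ha⟩ := hS
  let L := dotProductEquiv (ZMod 2) (Fin n) α
  have hker : L.ker = ⊤ := by
    refine hirr a _ fun x hx => ⟨a + x, ?_, ?_⟩
    · change α ⬝ᵥ (a + x) = 0
      rw [← chi_eq_one_iff, AddChar.map_add_eq_mul, chi_eq_of_charSum_eq_mul_card he h ha,
        chi_eq_of_charSum_eq_mul_card he h hx, Int.isUnit_mul_self he]
    · change a + (a + x) = x
      rw [← add_assoc, ZModModule.add_self, zero_add]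
  exact (dotProductEquiv (ZMod 2) (Fin n)).map_eq_zero_iff.mp (LinearMap.ker_eq_top.mp hker)

end Flats

section FiniteSets

variable {E : Type*} [AddCommGroup E] [Module (ZMod 2) E]

theorem even_card_of_add_mem {T : Finset E} {γ : E} (hγ : γ ≠ 0) (h : ∀ δ ∈ T, γ + δ ∈ T) :
    Even #T := by
  have hsum : ∑ _δ ∈ T, (1 : ZMod 2) = 0 :=
    sum_involution (fun δ _ => γ + δ) (fun _ _ => by decide)
      (fun δ _ _ hfix => hγ (add_eq_right.1 hfix)) h
      (fun δ _ => by rw [← add_assoc, ZModModule.add_self, zero_add])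
  rwa [sum_const, nsmul_one, ZMod.natCast_eq_zero_iff_even] at hsum

theorem card_symmDiff_inter_add {X : Type*} [DecidableEq X] {A B C Q T : Finset X}
    (hAB : A ∩ B = Q) (hBC : B ∩ C = Q) (hCA : C ∩ A = Q) :
    #((A ∆ B ∆ C) ∩ T) + 2 * #(Q ∩ T) = #(A ∩ T) + #(B ∩ T) + #(C ∩ T) := by
  have card_eq (A : Finset X) : #(A ∩ T) = ∑ x ∈ T, if x ∈ A then 1 else 0 := by
    rw [inter_comm, ← filter_mem_eq_inter, card_filter]
  simp only [card_eq, mul_sum, ← sum_add_distrib]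
  refine sum_congr rfl fun x _ => ?_
  simp only [Finset.ext_iff, mem_inter] at hAB hBC hCA
  have := hAB x
  have := hBC x
  have := hCA x
  simp only [mem_symmDiff]
  grind

theorem four_le_card_of_mem {X : Type*} {T : Finset X} {a b c d : X}
    (ha : a ∈ T) (hb : b ∈ T) (hc : c ∈ T) (hd : d ∈ T) (hdistinct : [a, b, c, d].Nodup) :
    4 ≤ #T := by
  classical
  exact (List.toFinset_card_of_nodup hdistinct).symm.trans_le
    (card_le_card (by simp [insert_subset_iff, *]))

end FiniteSets

section UnitSpectrum

variable {S Q : Finset (Fin n → ZMod 2)} {d k : ℕ} {G : (Fin n → ZMod 2) → ℤ}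
  {α β δ ε x : Fin n → ZMod 2}

/-- The spectrum of an irreducible function with mean `2 / 2^k`: the indicator of `S ⊆ F_2^n` has
the Fourier coefficients `G α / 2^k`, with `G 0 = 2` and `G α ∈ {0, ±1}` for `α ≠ 0`. Here
`n = d + k`, which turns `G α / 2^k` into the exponential sum `2^d * G α`, and `±1` are
expressed as the units of `ℤ`. -/
structure HasUnitSpectrum (S : Finset (Fin n → ZMod 2)) (d k : ℕ)
    (G : (Fin n → ZMod 2) → ℤ) : Prop where
  add_eq : d + k = n
  charSum_eq : ∀ α, charSum S α = 2 ^ d * G α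
  coeff_zero : G 0 = 2
  isUnit_of_ne_zero : ∀ {α}, α ≠ 0 → G α ≠ 0 → IsUnit (G α)

/-- The part of `S` on which the character `chi α` disagrees with the sign of its coefficient. For
a unit coefficient it contains a quarter of the points of `S`. -/
def minority (S : Finset (Fin n → ZMod 2)) (G : (Fin n → ZMod 2) → ℤ) (α : Fin n → ZMod 2) :
    Finset (Fin n → ZMod 2) := side S α (-G α)

theorem minority_subset : minority S G α ⊆ S := side_subset

open Classical in
/-- The frequencies with unit coefficient whose minority contains `Q`. -/
noncomputable def link (S : Finset (Fin n → ZMod 2)) (G : (Fin n → ZMod 2) → ℤ)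
    (Q : Finset (Fin n → ZMod 2)) : Finset (Fin n → ZMod 2) :=
  univ.filter fun α => IsUnit (G α) ∧ Q ⊆ minority S G α

theorem mem_link : α ∈ link S G Q ↔ IsUnit (G α) ∧ Q ⊆ minority S G α := by
  simp [link]

/-- A nonzero translation of the frequencies that preserves the set of unit coefficients. -/
def IsPeriod (G : (Fin n → ZMod 2) → ℤ) (γ : Fin n → ZMod 2) : Prop :=
  γ ≠ 0 ∧ ∀ β, IsUnit (G β) → IsUnit (G (γ + β))

/-- A common part `Q` of at least four minorities having the size `2^d / 4` of the intersection of
two intersecting minorities. -/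
structure IsCore (S : Finset (Fin n → ZMod 2)) (d : ℕ) (G : (Fin n → ZMod 2) → ℤ)
    (Q : Finset (Fin n → ZMod 2)) : Prop where
  four_mul_card : 4 * #Q = 2 ^ d
  four_le_card_link : 4 ≤ #(link S G Q)

theorem IsCore.nonempty (hQ : IsCore S d G Q) : Q.Nonempty := by
  have hpos : 0 < 4 * #Q := hQ.four_mul_card ▸ by positivity
  exact card_pos.1 (pos_of_mul_pos_right hpos (Nat.zero_le 4))

theorem IsCore.subset (hQ : IsCore S d G Q) : Q ⊆ S := by
  obtain ⟨α, hα⟩ := card_pos.1 (hQ.four_le_card_link.trans_lt' four_pos)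
  exact (mem_link.1 hα).2.trans minority_subset

/-- The pieces of the sunflower of minorities around `Q`: for `α` in the link of `Q` this is
`minority S G α \ Q`, and for `α = 0`, whose minority is empty, it is `Q` itself. -/
def petal (S : Finset (Fin n → ZMod 2)) (G : (Fin n → ZMod 2) → ℤ) (Q : Finset (Fin n → ZMod 2))
    (α : Fin n → ZMod 2) : Finset (Fin n → ZMod 2) := Q ∆ minority S G α

theorem petal_eq_sdiff (hα : α ∈ link S G Q) : petal S G Q α = minority S G α \ Q :=
  symmDiff_of_le (mem_link.1 hα).2

theorem IsCore.petal_subset (hQ : IsCore S d G Q) : petal S G Q α ⊆ S :=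
  symmDiff_le_sup.trans (union_subset hQ.subset minority_subset)

/-- Three frequencies with unit coefficients whose pairwise sums have unit coefficients, while the
sum of all three has coefficient `0`. -/
structure IsTriad (G : (Fin n → ZMod 2) → ℤ) (α β δ : Fin n → ZMod 2) : Prop where
  isUnit₁ : IsUnit (G α)
  isUnit₂ : IsUnit (G β)
  isUnit₃ : IsUnit (G δ)
  coeff_add₁₂ : G (α + β) ≠ 0
  coeff_add₁₃ : G (α + δ) ≠ 0
  coeff_add₂₃ : G (β + δ) ≠ 0
  coeff_sum : G (α + β + δ) = 0

/-- A triad whose sum is not a period, as witnessed by a fourth frequency `ε`. -/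
structure IsAperiodicTriad (G : (Fin n → ZMod 2) → ℤ) (α β δ ε : Fin n → ZMod 2) : Prop
    extends IsTriad G α β δ where
  isUnit₄ : IsUnit (G ε)
  coeff_sum_add : G (α + β + δ + ε) = 0

theorem IsTriad.rotate (ht : IsTriad G α β δ) : IsTriad G β δ α where
  isUnit₁ := ht.isUnit₂
  isUnit₂ := ht.isUnit₃
  isUnit₃ := ht.isUnit₁
  coeff_add₁₂ := ht.coeff_add₂₃
  coeff_add₁₃ := add_comm α β ▸ ht.coeff_add₁₂
  coeff_add₂₃ := add_comm α δ ▸ ht.coeff_add₁₃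
  coeff_sum := add_rotate α β δ ▸ ht.coeff_sum

theorem IsTriad.ne (ht : IsTriad G α β δ) : α ≠ β := by
  rintro rfl
  refine ht.isUnit₃.ne_zero ?_
  rw [← ht.coeff_sum, ZModModule.add_self, zero_add]

theorem IsAperiodicTriad.rotate (ht : IsAperiodicTriad G α β δ ε) :
    IsAperiodicTriad G β δ α ε where
  toIsTriad := ht.toIsTriad.rotate
  isUnit₄ := ht.isUnit₄
  coeff_sum_add := add_rotate α β δ ▸ ht.coeff_sum_add

theorem IsAperiodicTriad.ne_fourth (ht : IsAperiodicTriad G α β δ ε) : α ≠ ε := by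
  rintro rfl
  refine ht.coeff_add₂₃ ?_
  rw [← ht.coeff_sum_add, add_assoc α, add_right_comm, ZModModule.add_self, zero_add]

theorem IsAperiodicTriad.fourth_ne_add (ht : IsAperiodicTriad G α β δ ε) : ε ≠ α + β := by
  rintro rfl
  refine ht.isUnit₃.ne_zero ?_
  rw [← ht.coeff_sum_add, add_right_comm, ZModModule.add_self, zero_add]

namespace HasUnitSpectrum

section Counting

theorem card_eq (h : HasUnitSpectrum S d k G) : #S = 2 * 2 ^ d := by
  have := h.charSum_eq 0
  rw [charSum_zero, h.coeff_zero] at this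
  exact_mod_cast this.trans (mul_comm _ _)

theorem two_pow_eq (h : HasUnitSpectrum S d k G) : (2 : ℤ) ^ n = 2 ^ d * 2 ^ k := by
  rw [← pow_add, h.add_eq]

theorem ne_zero_of_isUnit (h : HasUnitSpectrum S d k G) (hα : IsUnit (G α)) : α ≠ 0 := by
  rintro rfl
  rw [h.coeff_zero] at hα
  exact absurd hα (by decide)

theorem zero_notMem_link (h : HasUnitSpectrum S d k G) : 0 ∉ link S G Q := fun h0 =>
  h.ne_zero_of_isUnit (mem_link.1 h0).1 rfl

theorem two_mul_charSum_minority (h : HasUnitSpectrum S d k G) (hα : IsUnit (G α))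
    (β : Fin n → ZMod 2) :
    2 * charSum (minority S G α) β = 2 ^ d * (G β - G α * G (α + β)) := by
  rw [minority, two_mul_charSum_side hα.neg, h.charSum_eq, h.charSum_eq]
  ring

theorem two_mul_card_minority (h : HasUnitSpectrum S d k G) (hα : IsUnit (G α)) :
    2 * #(minority S G α) = 2 ^ d := by
  have := h.two_mul_charSum_minority hα 0
  rw [charSum_zero, add_zero, h.coeff_zero, Int.isUnit_mul_self hα] at this
  push_cast [← Int.natCast_inj]
  linarith

theorem four_mul_charSum_minority_inter (h : HasUnitSpectrum S d k G) (hα : IsUnit (G α))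
    (hβ : IsUnit (G β)) (δ : Fin n → ZMod 2) :
    4 * charSum (minority S G α ∩ minority S G β) δ =
      2 ^ d * (G δ - G α * G (α + δ) - G β * G (β + δ) + G α * G β * G (α + β + δ)) := by
  have halve := two_mul_charSum_side (S := minority S G α) (α := β) (β := δ) hβ.neg
  rw [← inter_side_of_subset minority_subset, ← minority] at halve
  rw [add_assoc α]
  linear_combination 2 * halve + h.two_mul_charSum_minority hα δ -
    G β * h.two_mul_charSum_minority hα (β + δ)

theorem four_mul_card_minority_inter (h : HasUnitSpectrum S d k G) (hα : IsUnit (G α))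
    (hβ : IsUnit (G β)) :
    4 * (#(minority S G α ∩ minority S G β) : ℤ) = 2 ^ d * (G α * G β * G (α + β)) := by
  have := h.four_mul_charSum_minority_inter hα hβ 0
  rw [charSum_zero, add_zero, add_zero, add_zero, h.coeff_zero] at this
  linear_combination this - 2 ^ d * Int.isUnit_mul_self hα - 2 ^ d * Int.isUnit_mul_self hβ

theorem eight_mul_card_minority_inter_inter (h : HasUnitSpectrum S d k G) (hα : IsUnit (G α))
    (hβ : IsUnit (G β)) (hδ : IsUnit (G δ)) :
    8 * (#(minority S G α ∩ minority S G β ∩ minority S G δ) : ℤ) =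
      2 ^ d * (G α * G β * G (α + β) + G α * G δ * G (α + δ) + G β * G δ * G (β + δ) - 1 -
        G α * G β * G δ * G (α + β + δ)) := by
  have halve := two_mul_card_side (S := minority S G α ∩ minority S G β) (α := δ) hδ.neg
  rw [← inter_side_of_subset (inter_subset_left.trans minority_subset), ← minority] at halve
  linear_combination 4 * halve + h.four_mul_card_minority_inter hα hβ -
    G δ * h.four_mul_charSum_minority_inter hα hβ δ - 2 ^ d * Int.isUnit_mul_self hδ

theorem isUnit_add (h : HasUnitSpectrum S d k G) (hαβ : α ≠ β) (hG : G (α + β) ≠ 0) :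
    IsUnit (G (α + β)) :=
  h.isUnit_of_ne_zero (fun h0 => hαβ (by rwa [← ZModModule.sub_eq_add, sub_eq_zero] at h0)) hG

theorem coeff_add_of_ne_zero (h : HasUnitSpectrum S d k G) (hα : IsUnit (G α))
    (hβ : IsUnit (G β)) (hαβ : α ≠ β) (hG : G (α + β) ≠ 0) : G (α + β) = G α * G β := by
  refine (Int.isUnit_eq_or_eq_neg (h.isUnit_add hαβ hG) (hα.mul hβ)).resolve_right fun hneg => ?_
  have := h.four_mul_card_minority_inter hα hβ
  rw [hneg, mul_neg, Int.isUnit_mul_self (hα.mul hβ)] at this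
  have : (0 : ℤ) < 2 ^ d := by positivity
  omega

theorem coeff_add_ne_zero_of_mem (h : HasUnitSpectrum S d k G) (hα : IsUnit (G α))
    (hβ : IsUnit (G β)) (hxα : x ∈ minority S G α) (hxβ : x ∈ minority S G β) :
    G (α + β) ≠ 0 := fun h0 => by
  have := h.four_mul_card_minority_inter hα hβ
  rw [h0, mul_zero, mul_zero] at this
  have : 0 < #(minority S G α ∩ minority S G β) := card_pos.2 ⟨x, mem_inter.2 ⟨hxα, hxβ⟩⟩
  omega

theorem coeff_add_eq_zero_of_disjoint (h : HasUnitSpectrum S d k G) (hα : IsUnit (G α))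
    (hβ : IsUnit (G β)) (hdisj : Disjoint (minority S G α) (minority S G β)) :
    G (α + β) = 0 := by
  have := h.four_mul_card_minority_inter hα hβ
  rw [disjoint_iff_inter_eq_empty.1 hdisj] at this
  simpa [hα.ne_zero, hβ.ne_zero] using this

theorem four_mul_card_minority_inter_of_ne_zero (h : HasUnitSpectrum S d k G)
    (hα : IsUnit (G α)) (hβ : IsUnit (G β)) (hαβ : α ≠ β) (hG : G (α + β) ≠ 0) :
    4 * #(minority S G α ∩ minority S G β) = 2 ^ d := by
  have := h.four_mul_card_minority_inter hα hβ
  rw [h.coeff_add_of_ne_zero hα hβ hαβ hG, Int.isUnit_mul_self (hα.mul hβ), mul_one] at this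
  exact_mod_cast this

theorem minority_add (h : HasUnitSpectrum S d k G) (hα : IsUnit (G α)) (hβ : IsUnit (G β))
    (hαβ : α ≠ β) (hG : G (α + β) ≠ 0) :
    minority S G (α + β) = minority S G α ∆ minority S G β := by
  rw [minority, h.coeff_add_of_ne_zero hα hβ hαβ hG, side_add hα hβ, minority, minority]

theorem sum_coeff_sq (h : HasUnitSpectrum S d k G) : ∑ α, G α ^ 2 = 2 * 2 ^ k := by
  have parseval := sum_charSum_sq S
  simp only [h.charSum_eq, mul_pow, ← mul_sum] at parseval
  rw [h.card_eq, h.two_pow_eq] at parseval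
  push_cast at parseval
  refine mul_left_cancel₀ (pow_ne_zero 2 (pow_ne_zero d (two_ne_zero (α := ℤ)))) ?_
  linear_combination parseval

theorem sum_coeff_mul_chi (h : HasUnitSpectrum S d k G) (hx : x ∈ S) :
    ∑ α, G α * chi α x = 2 ^ k := by
  have inversion := sum_charSum_mul_chi S x
  simp only [h.charSum_eq, mul_assoc, ← mul_sum] at inversion
  rw [if_pos hx, h.two_pow_eq] at inversion
  exact mul_left_cancel₀ (by positivity) inversion

theorem coeff_mul_chi (h : HasUnitSpectrum S d k G) (hx : x ∈ S) (hα : α ≠ 0) :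
    G α * chi α x = G α ^ 2 - 2 * if α ∈ link S G {x} then 1 else 0 := by
  simp only [mem_link, singleton_subset_iff, minority, mem_side, hx, true_and]
  by_cases h0 : G α = 0
  · simp [h0]
  have hunit := h.isUnit_of_ne_zero hα h0
  rcases Int.isUnit_eq_or_eq_neg (isUnit_chi α x) hunit with hchi | hchi
  · simp [hchi, hunit.ne_zero, sq, self_eq_neg]
  · rw [if_pos ⟨hunit, hchi⟩, hchi, sq, mul_neg, Int.isUnit_mul_self hunit]
    norm_num

theorem two_mul_card_link_singleton (h : HasUnitSpectrum S d k G) (hx : x ∈ S) :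
    2 * #(link S G {x}) + 2 = 2 ^ k := by
  have termwise (α) : G α * chi α x =
      G α ^ 2 - (2 * if α ∈ link S G {x} then 1 else 0) - if α = 0 then 2 else 0 := by
    by_cases hα : α = 0
    · subst hα
      simp [h.coeff_zero, h.zero_notMem_link (Q := {x})]
    · rw [h.coeff_mul_chi hx hα, if_neg hα, sub_zero]
  have inversion := h.sum_coeff_mul_chi hx
  simp only [termwise, sum_sub_distrib, ← mul_sum, h.sum_coeff_sq, sum_boole, sum_ite_eq',
    mem_univ, if_true, filter_univ_mem] at inversion
  push_cast [← Int.natCast_inj]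
  linarith

end Counting

section Flatness

theorem exists_eq_add_one (h : HasUnitSpectrum S d k G) (hα : IsUnit (G α)) :
    ∃ d', d = d' + 1 := by
  have := h.two_mul_card_minority hα
  refine Nat.exists_eq_add_one_of_ne_zero ?_
  rintro rfl
  omega

theorem isFlat_minority (h : HasUnitSpectrum S d k G) (hα : IsUnit (G α)) :
    IsFlat (d - 1) (minority S G α : Set (Fin n → ZMod 2)) := by
  have card := h.two_mul_card_minority hα
  obtain ⟨d, rfl⟩ := h.exists_eq_add_one hα
  rw [pow_succ', mul_right_inj' two_ne_zero] at card
  refine isFlat_of_card_dvd_charSum card fun β => ⟨G β - G α * G (α + β), ?_⟩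
  have := h.two_mul_charSum_minority hα β
  rw [pow_succ', mul_assoc] at this
  rw [card, Nat.cast_pow, Nat.cast_ofNat]
  exact mul_left_cancel₀ two_ne_zero this

theorem odd_coeff_iff (h : HasUnitSpectrum S d k G) : Odd (G β) ↔ IsUnit (G β) := by
  refine ⟨fun hodd => h.isUnit_of_ne_zero ?_ ?_, fun hunit => ?_⟩
  · rintro rfl
    rw [h.coeff_zero] at hodd
    exact absurd hodd (by decide)
  · intro h0
    simp [h0] at hodd
  · rcases Int.isUnit_iff.1 hunit with h1 | h1 <;> rw [h1] <;> decide

theorem coeff_period (h : HasUnitSpectrum S d k G) {γ : Fin n → ZMod 2} (hγ : IsPeriod G γ) :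
    G γ = 0 := by
  by_contra h0
  have := hγ.2 γ (h.isUnit_of_ne_zero hγ.1 h0)
  exact h.ne_zero_of_isUnit this (ZModModule.add_self γ)

theorem isFlat_side_period (h : HasUnitSpectrum S d k G) {γ : Fin n → ZMod 2}
    (hγ : IsPeriod G γ) {e : ℤ} (he : IsUnit e) :
    IsFlat d (side S γ e : Set (Fin n → ZMod 2)) := by
  have unit_iff (β) : IsUnit (G (γ + β)) ↔ IsUnit (G β) := by
    refine ⟨fun hβ => ?_, hγ.2 β⟩
    simpa only [← add_assoc, ZModModule.add_self, zero_add] using hγ.2 _ hβ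
  have card : #(side S γ e) = 2 ^ d := by
    have := two_mul_card_side (S := S) (α := γ) he
    rw [h.charSum_eq, h.coeff_period hγ, h.card_eq, mul_zero, mul_zero, add_zero] at this
    exact mul_left_cancel₀ two_ne_zero (by exact_mod_cast this)
  refine isFlat_of_card_dvd_charSum card fun β => ?_
  have same_parity : Even (G β) ↔ Even (G (γ + β)) := by
    rw [← Int.not_odd_iff_even, ← Int.not_odd_iff_even, h.odd_coeff_iff, h.odd_coeff_iff, unit_iff]
  obtain ⟨c, hc⟩ : Even (G β + e * G (γ + β)) := by
    rcases Int.isUnit_iff.1 he with rfl | rfl <;> simpa [Int.even_add] using same_parity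
  refine ⟨c, mul_left_cancel₀ two_ne_zero ?_⟩
  rw [two_mul_charSum_side he, h.charSum_eq, h.charSum_eq, card, Nat.cast_pow, Nat.cast_ofNat]
  linear_combination 2 ^ d * hc

end Flatness

section Sunflower

theorem minority_zero (h : HasUnitSpectrum S d k G) : minority S G 0 = ∅ := by
  refine filter_false_of_mem fun x _ => ?_
  rw [chi_zero_left, h.coeff_zero]
  decide

theorem petal_zero (h : HasUnitSpectrum S d k G) : petal S G Q 0 = Q := by
  rw [petal, h.minority_zero, ← bot_eq_empty, symmDiff_bot]

theorem coeff_add_ne_zero_of_mem_link (h : HasUnitSpectrum S d k G) (hQ : IsCore S d G Q)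
    (hα : α ∈ link S G Q) (hβ : β ∈ link S G Q) : G (α + β) ≠ 0 := by
  obtain ⟨x, hx⟩ := hQ.nonempty
  obtain ⟨hα, hQα⟩ := mem_link.1 hα
  obtain ⟨hβ, hQβ⟩ := mem_link.1 hβ
  exact h.coeff_add_ne_zero_of_mem hα hβ (hQα hx) (hQβ hx)

theorem minority_inter_eq_core (h : HasUnitSpectrum S d k G) (hQ : IsCore S d G Q)
    (hα : α ∈ link S G Q) (hβ : β ∈ link S G Q) (hαβ : α ≠ β) :
    minority S G α ∩ minority S G β = Q := by
  have hαβ0 := h.coeff_add_ne_zero_of_mem_link hQ hα hβ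
  obtain ⟨hα, hQα⟩ := mem_link.1 hα
  obtain ⟨hβ, hQβ⟩ := mem_link.1 hβ
  refine (eq_of_subset_of_card_le (subset_inter hQα hQβ) ?_).symm
  have := h.four_mul_card_minority_inter_of_ne_zero hα hβ hαβ hαβ0
  have := hQ.four_mul_card
  omega

theorem four_mul_card_petal (h : HasUnitSpectrum S d k G) (hQ : IsCore S d G Q)
    (hα : α ∈ insert 0 (link S G Q)) : 4 * #(petal S G Q α) = 2 ^ d := by
  rcases mem_insert.1 hα with rfl | hα
  · rw [h.petal_zero, hQ.four_mul_card]
  · have hunit := mem_link.1 hα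
    have := card_sdiff_add_card_eq_card hunit.2
    have := h.two_mul_card_minority hunit.1
    have := hQ.four_mul_card
    rw [petal_eq_sdiff hα]
    omega

theorem disjoint_petal (h : HasUnitSpectrum S d k G) (hQ : IsCore S d G Q)
    (hα : α ∈ insert 0 (link S G Q)) (hβ : β ∈ insert 0 (link S G Q)) (hαβ : α ≠ β) :
    Disjoint (petal S G Q α) (petal S G Q β) := by
  rcases mem_insert.1 hα with rfl | hα <;> rcases mem_insert.1 hβ with rfl | hβ
  · exact absurd rfl hαβ
  · rw [h.petal_zero, petal_eq_sdiff hβ]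
    exact disjoint_sdiff
  · rw [h.petal_zero, petal_eq_sdiff hα]
    exact sdiff_disjoint
  · rw [petal_eq_sdiff hα, petal_eq_sdiff hβ]
    refine disjoint_left.2 fun x hxα hxβ => (mem_sdiff.1 hxα).2 ?_
    rw [← h.minority_inter_eq_core hQ hα hβ hαβ]
    exact mem_inter.2 ⟨(mem_sdiff.1 hxα).1, (mem_sdiff.1 hxβ).1⟩

theorem four_mul_card_biUnion_petal (h : HasUnitSpectrum S d k G) (hQ : IsCore S d G Q) :
    4 * #((insert 0 (link S G Q)).biUnion (petal S G Q)) = (#(link S G Q) + 1) * 2 ^ d := by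
  rw [card_biUnion fun α hα β hβ => h.disjoint_petal hQ hα hβ, mul_sum,
    sum_congr rfl fun α hα => h.four_mul_card_petal hQ hα, sum_const,
    card_insert_of_notMem h.zero_notMem_link, smul_eq_mul]

theorem biUnion_petal_subset (hQ : IsCore S d G Q) :
    (insert 0 (link S G Q)).biUnion (petal S G Q) ⊆ S :=
  biUnion_subset.2 fun _ _ => hQ.petal_subset

theorem card_link_core_le (h : HasUnitSpectrum S d k G) (hQ : IsCore S d G Q) :
    #(link S G Q) ≤ 7 := by
  have hle : (#(link S G Q) + 1) * 2 ^ d ≤ 8 * 2 ^ d := by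
    have := card_le_card (biUnion_petal_subset hQ)
    have := h.card_eq
    rw [← h.four_mul_card_biUnion_petal hQ]
    omega
  exact Nat.le_of_succ_le_succ (Nat.le_of_mul_le_mul_right hle (by positivity))

theorem biUnion_petal (h : HasUnitSpectrum S d k G) (hQ : IsCore S d G Q)
    (hcard : #(link S G Q) = 7) : (insert 0 (link S G Q)).biUnion (petal S G Q) = S := by
  refine eq_of_subset_of_card_le (biUnion_petal_subset hQ) ?_
  have := h.four_mul_card_biUnion_petal hQ
  have := h.card_eq
  rw [hcard] at *
  omega

theorem sum_card_petal_inter_le (h : HasUnitSpectrum S d k G) (hQ : IsCore S d G Q)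
    (T : Finset (Fin n → ZMod 2)) :
    #(Q ∩ T) + ∑ α ∈ link S G Q, #(petal S G Q α ∩ T) ≤ #T := by
  calc #(Q ∩ T) + ∑ α ∈ link S G Q, #(petal S G Q α ∩ T)
      = ∑ α ∈ insert 0 (link S G Q), #(petal S G Q α ∩ T) := by
        rw [sum_insert h.zero_notMem_link, h.petal_zero]
    _ = #((insert 0 (link S G Q)).biUnion fun α => petal S G Q α ∩ T) :=
        (card_biUnion fun α hα β hβ hαβ => (h.disjoint_petal hQ hα hβ hαβ).mono
          inter_subset_left inter_subset_left).symm
    _ ≤ #T := card_le_card (biUnion_subset.2 fun _ _ => inter_subset_right)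

theorem card_petal_inter_minority (h : HasUnitSpectrum S d k G) (hQ : IsCore S d G Q)
    (hx : x ∈ Q) (hα : α ∈ link S G Q) (hβ : β ∈ link S G {x}) (hαβ : α ≠ β) :
    #(petal S G Q α ∩ minority S G β) + #(Q ∩ minority S G β) = #Q := by
  obtain ⟨hunit, hQα⟩ := mem_link.1 hα
  obtain ⟨hβ, hxβ⟩ := mem_link.1 hβ
  rw [singleton_subset_iff] at hxβ
  have hinter := h.four_mul_card_minority_inter_of_ne_zero hunit hβ hαβ
    (h.coeff_add_ne_zero_of_mem hunit hβ (hQα hx) hxβ)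
  have hsplit := card_sdiff_add_card_inter (minority S G α ∩ minority S G β) Q
  rw [inter_right_comm, inter_eq_right.2 hQα, ← sdiff_inter_right_comm,
    ← petal_eq_sdiff hα] at hsplit
  have := hQ.four_mul_card
  omega

theorem two_mul_card_core_le (h : HasUnitSpectrum S d k G) (hQ : IsCore S d G Q)
    (hx : x ∈ Q) (hβ : β ∈ link S G {x}) (hβQ : β ∉ link S G Q) :
    2 * #Q ≤ 3 * #(Q ∩ minority S G β) := by
  have petal_inter (α) (hα : α ∈ link S G Q) :
      #(petal S G Q α ∩ minority S G β) = #Q - #(Q ∩ minority S G β) :=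
    Nat.eq_sub_of_add_eq (h.card_petal_inter_minority hQ hx hα hβ (ne_of_mem_of_not_mem hα hβQ))
  have hle := h.sum_card_petal_inter_le hQ (minority S G β)
  rw [sum_congr rfl petal_inter, sum_const, smul_eq_mul] at hle
  have := Nat.mul_le_mul_right (#Q - #(Q ∩ minority S G β)) hQ.four_le_card_link
  have := h.two_mul_card_minority (mem_link.1 hβ).1
  have := hQ.four_mul_card
  omega

theorem card_core_dvd (h : HasUnitSpectrum S d k G) (hQ : IsCore S d G Q) (hβ : IsUnit (G β)) :
    #Q ∣ 2 * #(Q ∩ minority S G β) := by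
  obtain ⟨α, hα, δ, hδ, hαδ⟩ := one_lt_card.1 (hQ.four_le_card_link.trans_lt' (by norm_num))
  have htriple := h.eight_mul_card_minority_inter_inter (mem_link.1 hα).1 (mem_link.1 hδ).1 hβ
  have hpow : (2 : ℤ) ^ d = 4 * #Q := by exact_mod_cast hQ.four_mul_card.symm
  rw [h.minority_inter_eq_core hQ hα hδ hαδ, hpow] at htriple
  refine Int.natCast_dvd_natCast.1 ((mul_dvd_mul_iff_left (four_ne_zero (α := ℤ))).1 ?_)
  exact Dvd.intro _ (htriple.symm.trans (by push_cast; ring))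

theorem link_singleton_eq_link_core (h : HasUnitSpectrum S d k G) (hQ : IsCore S d G Q)
    (hx : x ∈ Q) : link S G {x} = link S G Q := by
  refine Subset.antisymm (fun β hβ => ?_) fun β hβ => ?_
  · by_contra hβQ
    -- The intersection of `Q` with the minority of `β` has 0, `#Q / 2` or `#Q` points; with at most
    -- half of `Q`, the minority of `β` could not accommodate its share of the at least four petals.
    have hunit := (mem_link.1 hβ).1
    have hlarge := h.two_mul_card_core_le hQ hx hβ hβQ
    obtain ⟨m, hm⟩ := h.card_core_dvd hQ hunit
    have hpos := hQ.nonempty.card_pos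
    have hm_gt : 1 < m := lt_of_mul_lt_mul_left (a := #Q) (by omega) (Nat.zero_le _)
    have hcard : #Q ≤ #(Q ∩ minority S G β) := by
      have := Nat.mul_le_mul_left #Q hm_gt
      omega
    have := inter_eq_left.1 (eq_of_subset_of_card_le inter_subset_left hcard)
    exact hβQ (mem_link.2 ⟨hunit, this⟩)
  · obtain ⟨hβ, hQβ⟩ := mem_link.1 hβ
    exact mem_link.2 ⟨hβ, singleton_subset_iff.2 (hQβ hx)⟩

theorem k_eq_four (h : HasUnitSpectrum S d k G) (hQ : IsCore S d G Q) :
    k = 4 ∧ #(link S G Q) = 7 := by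
  obtain ⟨x, hx⟩ := hQ.nonempty
  have hcount := h.two_mul_card_link_singleton (hQ.subset hx)
  rw [h.link_singleton_eq_link_core hQ hx] at hcount
  have := hQ.four_le_card_link
  have := h.card_link_core_le hQ
  have hk : k = 4 := by
    have hlt : 2 ^ 3 < 2 ^ k := by omega
    have hgt : 2 ^ k < 2 ^ 5 := by omega
    have := (Nat.pow_lt_pow_iff_right one_lt_two).1 hlt
    have := (Nat.pow_lt_pow_iff_right one_lt_two).1 hgt
    omega
  subst hk
  omega

theorem isFlat_petal_union (h : HasUnitSpectrum S d k G) (hQ : IsCore S d G Q)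
    (hα : α ∈ insert 0 (link S G Q)) (hβ : β ∈ insert 0 (link S G Q)) (hαβ : α ≠ β) :
    IsFlat (d - 1) (petal S G Q α ∪ petal S G Q β : Set (Fin n → ZMod 2)) := by
  have union_eq : petal S G Q α ∪ petal S G Q β = minority S G α ∆ minority S G β := by
    rw [← sup_eq_union, ← (h.disjoint_petal hQ hα hβ hαβ).symmDiff_eq_sup, petal, petal,
      symmDiff_symmDiff_symmDiff_comm, symmDiff_self, bot_symmDiff]
  rw [← coe_union, union_eq]
  rcases mem_insert.1 hα with rfl | hα <;> rcases mem_insert.1 hβ with rfl | hβ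
  · exact absurd rfl hαβ
  · rw [h.minority_zero, ← bot_eq_empty, bot_symmDiff]
    exact h.isFlat_minority (mem_link.1 hβ).1
  · rw [h.minority_zero, ← bot_eq_empty, symmDiff_bot]
    exact h.isFlat_minority (mem_link.1 hα).1
  · have hαβ0 := h.coeff_add_ne_zero_of_mem_link hQ hα hβ
    rw [← h.minority_add (mem_link.1 hα).1 (mem_link.1 hβ).1 hαβ hαβ0]
    exact h.isFlat_minority (h.isUnit_add hαβ hαβ0)

theorem exists_four_flats (h : HasUnitSpectrum S d k G) (hQ : IsCore S d G Q)
    (hcard : #(link S G Q) = 7) : ∃ T : Fin 4 → Set (Fin n → ZMod 2),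
      (∀ i, IsFlat (d - 1) (T i)) ∧ (Pairwise fun i j => Disjoint (T i) (T j)) ∧
        (S : Set (Fin n → ZMod 2)) = ⋃ i, T i := by
  obtain ⟨e⟩ : Nonempty (Fin 4 × Fin 2 ≃ ↥(insert 0 (link S G Q))) :=
    Fintype.card_eq.1 (by
      rw [Fintype.card_coe, card_insert_of_notMem h.zero_notMem_link, hcard]
      rfl)
  have disjoint_petals {p q : Fin 4 × Fin 2} (hpq : p ≠ q) :
      Disjoint (petal S G Q (e p)) (petal S G Q (e q)) :=
    h.disjoint_petal hQ (e p).2 (e q).2 (Subtype.coe_injective.ne (e.injective.ne hpq))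
  have mem_iff (x) : x ∈ S ↔ ∃ p, x ∈ petal S G Q (e p) := by
    refine (Finset.ext_iff.1 (h.biUnion_petal hQ hcard) x).symm.trans (mem_biUnion.trans ?_)
    exact ⟨fun ⟨α, hα, hx⟩ => ⟨e.symm ⟨α, hα⟩, by rwa [e.apply_symm_apply]⟩,
      fun ⟨p, hx⟩ => ⟨e p, (e p).2, hx⟩⟩
  refine ⟨fun i => petal S G Q (e (i, 0)) ∪ petal S G Q (e (i, 1)), fun i => ?_, ?_, ?_⟩
  · exact h.isFlat_petal_union hQ (e _).2 (e _).2
      (Subtype.coe_injective.ne (e.injective.ne (by simp)))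
  · intro i j hij
    simp only [Set.disjoint_union_left, Set.disjoint_union_right, disjoint_coe]
    exact ⟨⟨disjoint_petals (by simp [hij]), disjoint_petals (by simp [hij])⟩,
      disjoint_petals (by simp [hij]), disjoint_petals (by simp [hij])⟩
  · ext x
    simp [mem_iff, Prod.exists, Fin.exists_fin_two]

end Sunflower

section Dichotomy

theorem nonempty (h : HasUnitSpectrum S d k G) : S.Nonempty :=
  card_pos.1 (h.card_eq ▸ by positivity)

theorem exists_mem_minority (h : HasUnitSpectrum S d k G) (hα : IsUnit (G α)) :
    ∃ x, x ∈ minority S G α := by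
  have hpos : 0 < 2 * #(minority S G α) := h.two_mul_card_minority hα ▸ by positivity
  exact card_pos.1 (pos_of_mul_pos_right hpos (Nat.zero_le 2))

theorem exists_mem_notMem_minority (h : HasUnitSpectrum S d k G) (hα : IsUnit (G α)) :
    ∃ x ∈ S, x ∉ minority S G α := by
  refine exists_mem_notMem_of_card_lt_card ?_
  have := h.two_mul_card_minority hα
  have := h.card_eq
  have := h.nonempty.card_pos
  omega

theorem isUnit_add_add_of_disjoint (h : HasUnitSpectrum S d k G) (hα : IsUnit (G α))
    (hβ : IsUnit (G β)) (hδ : IsUnit (G δ))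
    (hαβ : Disjoint (minority S G α) (minority S G β))
    (hαδ : Disjoint (minority S G α) (minority S G δ))
    (hβδ : Disjoint (minority S G β) (minority S G δ)) : IsUnit (G (α + β + δ)) := by
  have htriple := h.eight_mul_card_minority_inter_inter hα hβ hδ
  rw [disjoint_iff_inter_eq_empty.1 hαβ, empty_inter, card_empty,
    h.coeff_add_eq_zero_of_disjoint hα hβ hαβ, h.coeff_add_eq_zero_of_disjoint hα hδ hαδ,
    h.coeff_add_eq_zero_of_disjoint hβ hδ hβδ] at htriple
  refine IsUnit.of_mul_eq_one (-(G α * G β * G δ)) ?_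
  refine mul_left_cancel₀ (a := 2 ^ d) (by positivity) ?_
  linear_combination -htriple

theorem exists_period_of_k_eq_one (h : HasUnitSpectrum S d 1 G) : ∃ γ, IsPeriod G γ := by
  have not_isUnit (β) : ¬ IsUnit (G β) := fun hβ => by
    obtain ⟨x, hx⟩ := h.exists_mem_minority hβ
    have hcount := h.two_mul_card_link_singleton (minority_subset hx)
    have : 0 < #(link S G {x}) := card_pos.2 ⟨β, mem_link.2 ⟨hβ, singleton_subset_iff.2 hx⟩⟩
    omega
  have : NeZero n := ⟨by have := h.add_eq; omega⟩
  obtain ⟨γ, hγ⟩ := exists_ne (0 : Fin n → ZMod 2)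
  exact ⟨γ, hγ, fun β hβ => absurd hβ (not_isUnit β)⟩

theorem exists_period_of_k_eq_two (h : HasUnitSpectrum S d 2 G) : ∃ γ, IsPeriod G γ := by
  have card_link {x} (hx : x ∈ S) : #(link S G {x}) = 1 := by
    have := h.two_mul_card_link_singleton hx
    omega
  have exists_unit {x} (hx : x ∈ S) : ∃ α, IsUnit (G α) ∧ x ∈ minority S G α := by
    obtain ⟨α, hα⟩ := card_pos.1 ((card_link hx).symm ▸ one_pos)
    exact ⟨α, by simpa [mem_link] using hα⟩
  have disjoint {α β} (hα : IsUnit (G α)) (hβ : IsUnit (G β)) (hαβ : α ≠ β) :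
      Disjoint (minority S G α) (minority S G β) := disjoint_left.2 fun x hxα hxβ =>
    hαβ (card_le_one.1 (card_link (minority_subset hxα)).le α (by simp [mem_link, *])
      β (by simp [mem_link, *]))
  obtain ⟨x, hx⟩ := h.nonempty
  obtain ⟨α, hα, -⟩ := exists_unit hx
  obtain ⟨y, hy, hyα⟩ := h.exists_mem_notMem_minority hα
  obtain ⟨β, hβ, hyβ⟩ := exists_unit hy
  have hαβ : α ≠ β := fun hαβ => hyα (hαβ ▸ hyβ)
  refine ⟨α + β, ?_, fun δ hδ => ?_⟩
  · rwa [← ZModModule.sub_eq_add, sub_ne_zero]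
  rcases eq_or_ne α δ with rfl | hαδ
  · rwa [add_right_comm, ZModModule.add_self, zero_add]
  rcases eq_or_ne β δ with rfl | hβδ
  · rwa [add_assoc, ZModModule.add_self, add_zero]
  exact h.isUnit_add_add_of_disjoint hα hβ hδ (disjoint hα hβ hαβ) (disjoint hα hδ hαδ)
    (disjoint hβ hδ hβδ)

end Dichotomy

section Triads

theorem minority_inter_subset (h : HasUnitSpectrum S d k G) (ht : IsTriad G α β δ) :
    minority S G α ∩ minority S G β ⊆ minority S G δ := by
  have hαβ := h.coeff_add_of_ne_zero ht.isUnit₁ ht.isUnit₂ ht.ne ht.coeff_add₁₂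
  have hβδ := h.coeff_add_of_ne_zero ht.isUnit₂ ht.isUnit₃ ht.rotate.ne ht.coeff_add₂₃
  have hαδ := h.coeff_add_of_ne_zero ht.isUnit₁ ht.isUnit₃ ht.rotate.rotate.ne.symm ht.coeff_add₁₃
  have htriple := h.eight_mul_card_minority_inter_inter ht.isUnit₁ ht.isUnit₂ ht.isUnit₃
  rw [hαβ, hβδ, hαδ, ht.coeff_sum, Int.isUnit_mul_self (ht.isUnit₁.mul ht.isUnit₂),
    Int.isUnit_mul_self (ht.isUnit₁.mul ht.isUnit₃),
    Int.isUnit_mul_self (ht.isUnit₂.mul ht.isUnit₃)] at htriple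
  have hpair := h.four_mul_card_minority_inter_of_ne_zero ht.isUnit₁ ht.isUnit₂ ht.ne ht.coeff_add₁₂
  have hpair : (2 : ℤ) ^ d = 4 * #(minority S G α ∩ minority S G β) := by exact_mod_cast hpair.symm
  exact inter_eq_left.1 (eq_of_subset_of_card_le inter_subset_left (by omega))

theorem minority_inter_rotate (h : HasUnitSpectrum S d k G) (ht : IsTriad G α β δ) :
    minority S G β ∩ minority S G δ = minority S G α ∩ minority S G β :=
  Subset.antisymm (subset_inter (h.minority_inter_subset ht.rotate) inter_subset_left)
    (subset_inter inter_subset_right (h.minority_inter_subset ht))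

theorem four_mul_card_minority_inter_of_not_disjoint (h : HasUnitSpectrum S d k G)
    (hα : IsUnit (G α)) (hβ : IsUnit (G β)) (hαβ : α ≠ β)
    (hdisj : ¬ Disjoint (minority S G α) (minority S G β)) :
    4 * #(minority S G α ∩ minority S G β) = 2 ^ d := by
  obtain ⟨x, hxα, hxβ⟩ := not_disjoint_iff.1 hdisj
  exact h.four_mul_card_minority_inter_of_ne_zero hα hβ hαβ
    (h.coeff_add_ne_zero_of_mem hα hβ hxα hxβ)

theorem four_mul_card_symmDiff_inter (h : HasUnitSpectrum S d k G)
    (ht : IsAperiodicTriad G α β δ ε) :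
    4 * #((minority S G α ∆ minority S G β ∆ minority S G δ) ∩ minority S G ε) = 2 ^ d := by
  obtain ⟨e, he, hside⟩ : ∃ e, IsUnit e ∧
      side S (α + β + δ) e = minority S G α ∆ minority S G β ∆ minority S G δ :=
    ⟨_, ((ht.isUnit₁.mul ht.isUnit₂).mul ht.isUnit₃).neg, by
      rw [side_add (ht.isUnit₁.mul ht.isUnit₂) ht.isUnit₃, side_add ht.isUnit₁ ht.isUnit₂,
        minority, minority, minority]⟩
  have hcard := two_mul_card_side (S := S) (α := α + β + δ) he
  have hchar := two_mul_charSum_side (S := S) (α := α + β + δ) (β := ε) he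
  have hhalf := two_mul_card_side (S := side S (α + β + δ) e) (α := ε) ht.isUnit₄.neg
  rw [← inter_side_of_subset side_subset, ← minority, hside] at hhalf
  rw [h.charSum_eq, h.charSum_eq, ht.coeff_sum_add, hside] at hchar
  rw [h.charSum_eq, ht.coeff_sum, h.card_eq, hside] at hcard
  push_cast at hcard
  zify
  linear_combination 2 * hhalf + hcard - G ε * hchar - 2 ^ d * Int.isUnit_mul_self ht.isUnit₄

theorem card_minority_inter_triad (h : HasUnitSpectrum S d k G)
    (ht : IsAperiodicTriad G α β δ ε) :
    2 ^ d + 8 * #(minority S G α ∩ minority S G β ∩ minority S G ε) =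
      4 * #(minority S G α ∩ minority S G ε) + 4 * #(minority S G β ∩ minority S G ε) +
        4 * #(minority S G δ ∩ minority S G ε) := by
  have hrotate := h.minority_inter_rotate ht.toIsTriad
  have hcount := card_symmDiff_inter_add (T := minority S G ε) rfl hrotate
    ((h.minority_inter_rotate ht.toIsTriad.rotate).trans hrotate)
  have := h.four_mul_card_symmDiff_inter ht
  omega

theorem isCore_of_not_disjoint (h : HasUnitSpectrum S d k G)
    (ht : IsAperiodicTriad G α β δ ε)
    (hempty : Disjoint (minority S G α ∩ minority S G β) (minority S G ε))
    (hα : ¬ Disjoint (minority S G α) (minority S G ε)) :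
    IsCore S d G (minority S G α ∩ minority S G ε) := by
  have hcard := h.four_mul_card_minority_inter_of_not_disjoint ht.isUnit₁ ht.isUnit₄ ht.ne_fourth hα
  have hcount := h.card_minority_inter_triad ht
  rw [disjoint_iff_inter_eq_empty.1 hempty, card_empty] at hcount
  have add_mem_link {η} (hη : IsUnit (G η)) (hαη : α ≠ η) (h0 : G (α + η) ≠ 0)
      (hdisj : #(minority S G η ∩ minority S G ε) = 0) :
      α + η ∈ link S G (minority S G α ∩ minority S G ε) := by
    refine mem_link.2 ⟨h.isUnit_add hαη h0, fun x hx => ?_⟩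
    obtain ⟨hxα, hxε⟩ := mem_inter.1 hx
    rw [h.minority_add ht.isUnit₁ hη hαη h0]
    refine mem_symmDiff.2 (.inl ⟨hxα, fun hxη => ?_⟩)
    exact notMem_empty x (card_eq_zero.1 hdisj ▸ mem_inter.2 ⟨hxη, hxε⟩)
  have hδα := ht.rotate.rotate.ne
  refine ⟨hcard, four_le_card_of_mem (mem_link.2 ⟨ht.isUnit₄, inter_subset_right⟩)
    (mem_link.2 ⟨ht.isUnit₁, inter_subset_left⟩)
    (add_mem_link ht.isUnit₂ ht.ne ht.coeff_add₁₂ (by omega))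
    (add_mem_link ht.isUnit₃ hδα.symm ht.coeff_add₁₃ (by omega)) ?_⟩
  have hε := add_comm δ α ▸ ht.rotate.rotate.fourth_ne_add
  simp [ht.ne_fourth.symm, ht.fourth_ne_add, hε, h.ne_zero_of_isUnit ht.isUnit₂,
    h.ne_zero_of_isUnit ht.isUnit₃, ht.rotate.ne]

theorem isCore_of_mem (h : HasUnitSpectrum S d k G) (ht : IsAperiodicTriad G α β δ ε)
    (hx : x ∈ minority S G α ∩ minority S G β) (hxε : x ∈ minority S G ε) :
    IsCore S d G (minority S G α ∩ minority S G β) := by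
  obtain ⟨hxα, hxβ⟩ := mem_inter.1 hx
  have hδ := h.minority_inter_subset ht.toIsTriad
  have card_inter {η} (hη : IsUnit (G η)) (hηε : η ≠ ε) (hxη : x ∈ minority S G η) :
      4 * #(minority S G η ∩ minority S G ε) = 2 ^ d :=
    h.four_mul_card_minority_inter_of_not_disjoint hη ht.isUnit₄ hηε
      (not_disjoint_iff.2 ⟨x, hxη, hxε⟩)
  have hcount := h.card_minority_inter_triad ht
  rw [card_inter ht.isUnit₁ ht.ne_fourth hxα, card_inter ht.isUnit₂ ht.rotate.ne_fourth hxβ,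
    card_inter ht.isUnit₃ ht.rotate.rotate.ne_fourth (hδ hx)] at hcount
  have hQ := h.four_mul_card_minority_inter_of_ne_zero ht.isUnit₁ ht.isUnit₂ ht.ne ht.coeff_add₁₂
  have hQε := inter_eq_left.1 (eq_of_subset_of_card_le (s := minority S G α ∩ minority S G β ∩
    minority S G ε) inter_subset_left (by omega))
  refine ⟨hQ, four_le_card_of_mem (mem_link.2 ⟨ht.isUnit₁, inter_subset_left⟩)
    (mem_link.2 ⟨ht.isUnit₂, inter_subset_right⟩) (mem_link.2 ⟨ht.isUnit₃, hδ⟩)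
    (mem_link.2 ⟨ht.isUnit₄, hQε⟩) ?_⟩
  simp [ht.ne, ht.rotate.ne, ht.rotate.rotate.ne.symm, ht.ne_fourth, ht.rotate.ne_fourth,
    ht.rotate.rotate.ne_fourth]

theorem exists_core_of_aperiodicTriad (h : HasUnitSpectrum S d k G)
    (ht : IsAperiodicTriad G α β δ ε) : ∃ Q, IsCore S d G Q := by
  by_cases hempty : Disjoint (minority S G α ∩ minority S G β) (minority S G ε)
  · have hrotate := h.minority_inter_rotate ht.toIsTriad
    have hrotate' := (h.minority_inter_rotate ht.toIsTriad.rotate).trans hrotate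
    by_cases hα : Disjoint (minority S G α) (minority S G ε)
    · by_cases hβ : Disjoint (minority S G β) (minority S G ε)
      · refine ⟨_, h.isCore_of_not_disjoint ht.rotate.rotate (hrotate' ▸ hempty) fun hδ => ?_⟩
        have hcount := h.card_minority_inter_triad ht
        rw [disjoint_iff_inter_eq_empty.1 hα, disjoint_iff_inter_eq_empty.1 hβ,
          disjoint_iff_inter_eq_empty.1 hδ, disjoint_iff_inter_eq_empty.1 hempty] at hcount
        simp at hcount
      · exact ⟨_, h.isCore_of_not_disjoint ht.rotate (hrotate ▸ hempty) hβ⟩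
    · exact ⟨_, h.isCore_of_not_disjoint ht hempty hα⟩
  · obtain ⟨x, hx, hxε⟩ := not_disjoint_iff.1 hempty
    exact ⟨_, h.isCore_of_mem ht hx hxε⟩

theorem add_add_mem_link_singleton (h : HasUnitSpectrum S d k G) (hα : α ∈ link S G {x})
    (hβ : β ∈ link S G {x}) (hδ : δ ∈ link S G {x}) (hαβ : α ≠ β) (h0 : G (α + β + δ) ≠ 0) :
    α + β + δ ∈ link S G {x} := by
  simp only [mem_link, singleton_subset_iff] at hα hβ hδ ⊢
  have hαβ0 := h.coeff_add_ne_zero_of_mem hα.1 hβ.1 hα.2 hβ.2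
  have hx : x ∉ minority S G (α + β) := by
    rw [h.minority_add hα.1 hβ.1 hαβ hαβ0]
    simp [mem_symmDiff, hα.2, hβ.2]
  have hne : α + β ≠ δ := by
    rintro rfl
    exact hx hδ.2
  refine ⟨h.isUnit_add hne h0, ?_⟩
  rw [h.minority_add (h.isUnit_add hαβ hαβ0) hδ.1 hne h0]
  exact mem_symmDiff.2 (.inr ⟨hδ.2, hx⟩)

theorem exists_triad (h : HasUnitSpectrum S d k G) (hk : 3 ≤ k) : ∃ α β δ, IsTriad G α β δ := by
  obtain ⟨x, hx⟩ := h.nonempty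
  have card_link := h.two_mul_card_link_singleton hx
  obtain ⟨k, rfl⟩ := Nat.exists_eq_add_of_le' hk
  have hpow : 2 ^ (k + 3) = 8 * 2 ^ k := by ring
  have : 0 < 2 ^ k := by positivity
  obtain ⟨α, hα, β, hβ, hαβ⟩ := one_lt_card.1 (show 1 < #(link S G {x}) by omega)
  obtain ⟨δ, hδ, hsum⟩ : ∃ δ ∈ link S G {x}, α + β + δ ∉ link S G {x} := by
    by_contra! hclosed
    have hγ : α + β ≠ 0 := by rwa [← ZModModule.sub_eq_add, sub_ne_zero]
    obtain ⟨t, ht⟩ := even_card_of_add_mem hγ hclosed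
    omega
  have coeff_sum : G (α + β + δ) = 0 := by
    by_contra h0
    exact hsum (h.add_add_mem_link_singleton hα hβ hδ hαβ h0)
  simp only [mem_link, singleton_subset_iff] at hα hβ hδ
  exact ⟨α, β, δ, hα.1, hβ.1, hδ.1, h.coeff_add_ne_zero_of_mem hα.1 hβ.1 hα.2 hβ.2,
    h.coeff_add_ne_zero_of_mem hα.1 hδ.1 hα.2 hδ.2,
    h.coeff_add_ne_zero_of_mem hβ.1 hδ.1 hβ.2 hδ.2, coeff_sum⟩

theorem isPeriod_of_forall_not_isAperiodicTriad (h : HasUnitSpectrum S d k G)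
    (ht : IsTriad G α β δ) (hper : ∀ ε, ¬ IsAperiodicTriad G α β δ ε) :
    IsPeriod G (α + β + δ) := by
  refine ⟨fun hγ => ?_, fun ε hε => ?_⟩
  · have := ht.coeff_sum
    rw [hγ, h.coeff_zero] at this
    exact absurd this (by decide)
  · refine h.isUnit_add ?_ fun h0 => hper ε ⟨ht, hε, h0⟩
    rintro rfl
    exact hε.ne_zero ht.coeff_sum

end Triads

theorem exists_period_or_core (h : HasUnitSpectrum S d k G) :
    (∃ γ, IsPeriod G γ) ∨ ∃ Q, IsCore S d G Q := by
  rcases k with _ | _ | _ | k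
  · obtain ⟨x, hx⟩ := h.nonempty
    have := h.two_mul_card_link_singleton hx
    omega
  · exact .inl h.exists_period_of_k_eq_one
  · exact .inl h.exists_period_of_k_eq_two
  · obtain ⟨α, β, δ, ht⟩ := h.exists_triad (by omega)
    by_cases hper : ∃ ε, IsAperiodicTriad G α β δ ε
    · obtain ⟨ε, hε⟩ := hper
      exact .inr (h.exists_core_of_aperiodicTriad hε)
    · exact .inl ⟨_, h.isPeriod_of_forall_not_isAperiodicTriad ht (not_exists.1 hper)⟩

theorem isFlat_union_or_four_flats (h : HasUnitSpectrum S d k G) :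
    (∃ T₁ T₂ : Set (Fin n → ZMod 2), IsFlat d T₁ ∧ IsFlat d T₂ ∧ Disjoint T₁ T₂ ∧
      (S : Set (Fin n → ZMod 2)) = T₁ ∪ T₂) ∨
    k = 4 ∧ ∃ T : Fin 4 → Set (Fin n → ZMod 2), (∀ i, IsFlat (d - 1) (T i)) ∧
      (Pairwise fun i j => Disjoint (T i) (T j)) ∧
      (S : Set (Fin n → ZMod 2)) = ⋃ i, T i := by
  rcases h.exists_period_or_core with ⟨γ, hγ⟩ | ⟨Q, hQ⟩
  · refine .inl ⟨side S γ 1, side S γ (-1), h.isFlat_side_period hγ isUnit_one,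
      h.isFlat_side_period hγ isUnit_one.neg, disjoint_coe.2 (disjoint_side_neg isUnit_one), ?_⟩
    rw [← coe_union, side_union_side_neg isUnit_one]
  · obtain ⟨hk, hcard⟩ := h.k_eq_four hQ
    exact .inr ⟨hk, h.exists_four_flats hQ hcard⟩

end HasUnitSpectrum

section Spectrum

theorem isFlat_of_coeff_zero_eq_one (hsum : ∀ α, charSum S α = 2 ^ d * G α) (h0 : G 0 = 1) :
    IsFlat d (S : Set (Fin n → ZMod 2)) := by
  have card : (#S : ℤ) = 2 ^ d := by rw [← charSum_zero, hsum, h0, mul_one]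
  exact isFlat_of_card_dvd_charSum (by exact_mod_cast card) fun α => ⟨G α, card ▸ hsum α⟩

theorem IsAffinelyIrreducible.hasUnitSpectrum
    (hirr : IsAffinelyIrreducible (S : Set (Fin n → ZMod 2))) (hdk : d + k = n)
    (hsum : ∀ α, charSum S α = 2 ^ d * G α) (h0 : G 0 = 2) (habs : ∀ α, |G α| ≤ 2) :
    HasUnitSpectrum S d k G where
  add_eq := hdk
  charSum_eq := hsum
  coeff_zero := h0
  isUnit_of_ne_zero {α} hα hGα := by
    by_contra hunit
    have card : (#S : ℤ) = 2 ^ d * 2 := by rw [← charSum_zero, hsum, h0]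
    have hS : S.Nonempty := by
      rw [← card_pos, ← Int.natCast_pos, card]
      positivity
    obtain ⟨e, he, hGe⟩ : ∃ e, IsUnit e ∧ G α = e * 2 := by
      have := abs_le.1 (habs α)
      rw [Int.isUnit_iff] at hunit
      rcases (by omega : G α = 2 ∨ G α = -2) with hG | hG
      · exact ⟨1, isUnit_one, hG⟩
      · exact ⟨-1, isUnit_one.neg, hG⟩
    exact hα (hirr.eq_zero_of_charSum_eq_mul_card hS he (by rw [hsum, hGe, card]; ring))

theorem exists_intCast_coeff {f : (Fin n → ZMod 2) → ℝ}
    (hcoef : ∀ α : Fin n → ZMod 2,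
      fc f α = 0 ∨ fc f α = 1 / 2 ^ k ∨ fc f α = -(1 / 2 ^ k) ∨
      fc f α = 2 / 2 ^ k ∨ fc f α = -(2 / 2 ^ k)) :
    ∃ G : (Fin n → ZMod 2) → ℤ, (∀ α, |G α| ≤ 2) ∧ ∀ α, fc f α = G α / 2 ^ k := by
  have exists_coeff (α) : ∃ g : ℤ, |g| ≤ 2 ∧ fc f α = g / 2 ^ k := by
    rcases hcoef α with h | h | h | h | h
    · exact ⟨0, by norm_num, by simp [h]⟩
    · exact ⟨1, by norm_num, by simp [h]⟩
    · exact ⟨-1, by norm_num, by simp [h, neg_div]⟩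
    · exact ⟨2, by norm_num, by simp [h]⟩
    · exact ⟨-2, by norm_num, by simp [h, neg_div]⟩
  choose G habs hfc using exists_coeff
  exact ⟨G, habs, hfc⟩

theorem charSum_eq_of_fc_eq (hkn : k ≤ n) {f : (Fin n → ZMod 2) → ℝ}
    (hf : ∀ x, f x = 0 ∨ f x = 1) (hS : (S : Set (Fin n → ZMod 2)) = {x | f x = 1})
    (hfc : ∀ α, fc f α = G α / 2 ^ k) (α : Fin n → ZMod 2) :
    charSum S α = 2 ^ (n - k) * G α := by
  have term_eq (x) : f x * (-1 : ℝ) ^ (∑ i, α i * x i : ZMod 2).val =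
      if x ∈ S then (chi α x : ℝ) else 0 := by
    have mem_iff : x ∈ S ↔ f x = 1 := Set.ext_iff.1 hS x
    rcases hf x with hx | hx <;> simp [mem_iff, hx, chi_apply, dotProduct]
  have hcharSum : (charSum S α : ℝ) / 2 ^ n = G α / 2 ^ k := by
    rw [← hfc, fc, sum_congr rfl fun x _ => term_eq x, ← sum_filter, filter_univ_mem, charSum,
      Int.cast_sum]
  have hpow : (2 : ℝ) ^ n = 2 ^ (n - k) * 2 ^ k := by rw [← pow_add, Nat.sub_add_cancel hkn]
  rw [hpow, div_eq_div_iff (by positivity) (by positivity)] at hcharSum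
  have : (charSum S α : ℝ) = 2 ^ (n - k) * G α :=
    mul_right_cancel₀ (pow_ne_zero k (two_ne_zero (α := ℝ))) (by linear_combination hcharSum)
  exact_mod_cast this

end Spectrum

end UnitSpectrum

/-- Main Theorem. -/
theorem stmt_15 {n k : ℕ} (hk : 1 ≤ k) (hn : k < n) (f : (Fin n → ZMod 2) → ℝ)
    (hf : ∀ x, f x = 0 ∨ f x = 1)
    (hnt0 : ∃ x, f x = 1) (hnt1 : ∃ x, f x = 0)
    (hcoef : ∀ α : Fin n → ZMod 2,
      fc f α = 0 ∨ fc f α = 1 / 2 ^ k ∨ fc f α = -(1 / 2 ^ k) ∨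
      fc f α = 2 / 2 ^ k ∨ fc f α = -(2 / 2 ^ k)) :
    (fc f 0 = 1 / 2 ^ k →
      ∃ (a : Fin n → ZMod 2) (V : Submodule (ZMod 2) (Fin n → ZMod 2)),
        Module.finrank (ZMod 2) V = n - k ∧
        {x | f x = 1} = (a + ·) '' (V : Set (Fin n → ZMod 2))) ∧
    (fc f 0 = 2 / 2 ^ k →
      (∀ (a : Fin n → ZMod 2) (V : Submodule (ZMod 2) (Fin n → ZMod 2)),
        {x | f x = 1} ⊆ (a + ·) '' (V : Set (Fin n → ZMod 2)) → V = ⊤) →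
      ((∃ (a b : Fin n → ZMod 2) (V W : Submodule (ZMod 2) (Fin n → ZMod 2)),
          Module.finrank (ZMod 2) V = n - k ∧ Module.finrank (ZMod 2) W = n - k ∧
          Disjoint ((a + ·) '' (V : Set (Fin n → ZMod 2)))
            ((b + ·) '' (W : Set (Fin n → ZMod 2))) ∧
          {x | f x = 1} =
            (a + ·) '' (V : Set (Fin n → ZMod 2)) ∪ (b + ·) '' (W : Set (Fin n → ZMod 2))) ∨
        (k = 4 ∧
          ∃ (a : Fin 4 → (Fin n → ZMod 2)) (V : Fin 4 → Submodule (ZMod 2) (Fin n → ZMod 2)),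
            (∀ i, Module.finrank (ZMod 2) (V i) = n - k - 1) ∧
            (Pairwise fun i j =>
              Disjoint ((a i + ·) '' (V i : Set (Fin n → ZMod 2)))
                ((a j + ·) '' (V j : Set (Fin n → ZMod 2)))) ∧
            {x | f x = 1} = ⋃ i, (a i + ·) '' (V i : Set (Fin n → ZMod 2))))) := by
  obtain ⟨G, habs, hfc⟩ := exists_intCast_coeff hcoef
  have coeff_zero {g : ℤ} (hg : fc f 0 = g / 2 ^ k) : G 0 = g := by
    exact_mod_cast (div_left_inj' (by positivity)).1 ((hfc 0).symm.trans hg)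
  obtain ⟨S, hS⟩ := (Set.toFinite {x | f x = 1}).exists_finset_coe
  have hsum := charSum_eq_of_fc_eq hn.le hf hS hfc
  rw [← hS]
  refine ⟨fun h0 => isFlat_of_coeff_zero_eq_one hsum (coeff_zero (by rwa [Int.cast_one])),
    fun h0 hirr => ?_⟩
  have h := IsAffinelyIrreducible.hasUnitSpectrum hirr (Nat.sub_add_cancel hn.le) hsum
    (coeff_zero (by rwa [Int.cast_ofNat])) habs
  rcases h.isFlat_union_or_four_flats with
    ⟨_, _, ⟨a, V, hV, rfl⟩, ⟨b, W, hW, rfl⟩, hdisj, hunion⟩ | ⟨hk4, T, hT, hdisj, hunion⟩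
  · exact .inl ⟨a, b, V, W, hV, hW, hdisj, hunion⟩
  · choose a V hV hTV using hT
    obtain rfl := funext hTV
    exact .inr ⟨hk4, a, V, hV, hdisj, hunion⟩
end
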